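/- arXiv:0807.2155 — 2 statements merged into one kernel-verified Lean document; each statement's English description precedes it below -/
import Mathlib

section
/- Fix a real number q with 0 < q < 1. For every integer n ≥ 0 and every Λ ∈ ℂ with Λ ≠ 0, the following Shintani–Casselman–Shalika-type identity of type A₁ holds: q^{n²/4} · Ψ̃(q^{−n/2}, Λ) = θ(Λ) · P̄_n(Λ) · ∏_{j=1}^∞ (1 − qʲ)^{−1}. (Theorem 3.3 of the paper in the rank-one case, equation (4.33).) -/
/-!
Let `H(T) = ∑ P̄ₘ(Λ) Tᵐ / (q; q)ₘ` be the generating function of the continuous q-Hermite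
polynomials and `S(t) = ∑ₘ q^((m - t)²/4) [Tᵐ] H`. Completing the square turns the left-hand side of
the identity into `S(n)`. Multiplying a power series by `T` shifts `t` by `1` under the Gaussian
weight, and replacing `T` by `qT` shifts it by `2` up to a power of `q`; hence the q-difference
equation `H(qT) = (1 - ΛT)(1 - Λ⁻¹T) H(T)` becomes a three-term recurrence in `t`, which at integers
is that of `P̄ₙ`. So `S(n) = P̄ₙ(Λ) S(0)`. Finally `S(0)` is a double sum over
`H(T) = E(ΛT) E(Λ⁻¹T)`, with `E` Euler's q-exponential; grouping by powers of `Λ` leaves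
Durfee's rectangle series, each equal to `∏ (1 - qʲ)⁻¹`, times the terms of the theta function.
These series tend to that product as the rectangles get longer, while the distances between
consecutive ones do not decrease, so they are all equal to it.
-/

open scoped BigOperators
open Filter

noncomputable section

/-- Symmetric monomial `M_r(X) = X^r + X^{-r}` for `r ≥ 1`, `M_0 = 1`. -/
def Msym (r : ℕ) (X : ℂ) : ℂ := if r = 0 then 1 else X ^ r + X⁻¹ ^ r

/-- Continuous q-Hermite Laurent polynomial (Macdonald polynomial of type A₁ at t = 0). -/
def PbarA1 (q : ℝ) (n : ℕ) (X : ℂ) : ℂ :=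
  Msym n X + ∑ j ∈ Finset.Icc 1 (n / 2),
    (∏ i ∈ Finset.range j, (1 - (q : ℂ) ^ (n - i)) / (1 - (q : ℂ) ^ (i + 1))) *
      Msym (n - 2 * j) X

/-- Global q-Whittaker function of type A₁. -/
def whitA1 (q : ℝ) (X Λ : ℂ) : ℂ :=
  ∑' n : ℕ, ((q ^ ((n : ℝ) ^ 2 / 4) : ℝ) : ℂ) * X ^ n * PbarA1 q n Λ /
    ∏ j ∈ Finset.Icc 1 n, (1 - (q : ℂ) ^ j)

/-- Theta function `θ(Λ) = ∑_{j ∈ ℤ} q^{j²/4} Λ^j`. -/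
def thetaA1 (q : ℝ) (Λ : ℂ) : ℂ :=
  ∑' j : ℤ, ((q ^ ((j : ℝ) ^ 2 / 4) : ℝ) : ℂ) * Λ ^ j

/-- Rogers Laurent polynomial (symmetric Macdonald polynomial of type A₁). -/
def RogersA1 (q : ℝ) (t : ℂ) (n : ℕ) (X : ℂ) : ℂ :=
  Msym n X + ∑ j ∈ Finset.Icc 1 (n / 2),
    (∏ i ∈ Finset.range j,
      ((1 - (q : ℂ) ^ (n - i)) * (1 - t * (q : ℂ) ^ i)) /
      ((1 - (q : ℂ) ^ (1 + i)) * (1 - t * (q : ℂ) ^ (n - i - 1)))) *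
    Msym (n - 2 * j) X

/-- Global q,t-spherical function of type A₁, with `t = s²`. -/
def sphA1 (q s : ℝ) (X Λ : ℂ) : ℂ :=
  ∑' n : ℕ, (s : ℂ) ^ n * ((q ^ ((n : ℝ) ^ 2 / 4) : ℝ) : ℂ) *
    RogersA1 q ((s : ℂ) ^ 2) n X * RogersA1 q ((s : ℂ) ^ 2) n Λ *
    ∏ i ∈ Finset.range n,
      ((1 - (s : ℂ) ^ 2 * (q : ℂ) ^ i) * (1 - (s : ℂ) ^ 2 * (q : ℂ) ^ (i + 1))) /
      ((1 - ((s : ℂ) ^ 2) ^ 2 * (q : ℂ) ^ i) * (1 - (q : ℂ) ^ (i + 1)))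

/-- Macdonald truncated theta weight function of type A₁. -/
def muA1 (q : ℝ) (t : ℂ) (X : ℂ) : ℂ :=
  ∏' j : ℕ, ((1 - X ^ 2 * (q : ℂ) ^ j) * (1 - X⁻¹ ^ 2 * (q : ℂ) ^ (j + 1))) /
    ((1 - t * X ^ 2 * (q : ℂ) ^ j) * (1 - t * X⁻¹ ^ 2 * (q : ℂ) ^ (j + 1)))

section

open PowerSeries Finset Topology

/-! ### Euler's q-exponential and the q-Hermite generating function -/

section Algebra

variable {K : Type*} [Field K] {z : K}

/-- The q-Pochhammer symbol `(z; z)ₙ = (1 - z) (1 - z²) ⋯ (1 - zⁿ)`. -/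
def qPochhammer (z : K) (n : ℕ) : K := ∏ i ∈ range n, (1 - z ^ (i + 1))

lemma qPochhammer_zero (z : K) : qPochhammer z 0 = 1 := prod_range_zero _

lemma qPochhammer_succ (z : K) (n : ℕ) :
    qPochhammer z (n + 1) = qPochhammer z n * (1 - z ^ (n + 1)) := prod_range_succ _ _

lemma qPochhammer_ne_zero (hz : ∀ n, z ^ (n + 1) ≠ 1) (n : ℕ) : qPochhammer z n ≠ 0 :=
  prod_ne_zero_iff.mpr fun i _ => sub_ne_zero.mpr (hz i).symm

lemma prod_range_qBinomial (hz : ∀ n, z ^ (n + 1) ≠ 1) {n j : ℕ} (hj : j ≤ n) :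
    ∏ i ∈ range j, (1 - z ^ (n - i)) / (1 - z ^ (i + 1)) =
      qPochhammer z n / (qPochhammer z j * qPochhammer z (n - j)) := by
  induction j with
  | zero => simp [qPochhammer_zero, qPochhammer_ne_zero hz]
  | succ j ih =>
    have hsplit : n - j = n - (j + 1) + 1 := by omega
    have h₁ : 1 - z ^ (j + 1) ≠ 0 := sub_ne_zero.mpr (hz j).symm
    have h₂ : 1 - z ^ (n - (j + 1) + 1) ≠ 0 := sub_ne_zero.mpr (hz _).symm
    have h₃ := qPochhammer_ne_zero hz j
    have h₄ := qPochhammer_ne_zero hz (n - (j + 1))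
    rw [prod_range_succ, ih (by omega), hsplit, qPochhammer_succ, qPochhammer_succ]
    field_simp

/-- Euler's q-exponential `E(T) = ∑ Tⁿ / (z; z)ₙ`, as a formal power series. -/
def qExpSeries (z : K) : K⟦X⟧ := PowerSeries.mk fun n => (qPochhammer z n)⁻¹

lemma rescale_qExpSeries (hz : ∀ n, z ^ (n + 1) ≠ 1) :
    rescale z (qExpSeries z) = (1 - X) * qExpSeries z := by
  ext n
  rw [sub_mul, one_mul, map_sub, coeff_rescale]
  cases n with
  | zero => simp
  | succ n =>
    have h₁ := qPochhammer_ne_zero hz n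
    have h₂ : 1 - z ^ (n + 1) ≠ 0 := sub_ne_zero.mpr (hz n).symm
    rw [coeff_succ_X_mul, qExpSeries, coeff_mk, coeff_mk, qPochhammer_succ]
    field_simp
    ring

/-- The generating function `E(xT) E(yT)` of the homogeneous Rogers–Szegő polynomials; for
`y = x⁻¹` these are the continuous q-Hermite polynomials, divided by `(z; z)ₙ`. -/
def qHermiteSeries (z x y : K) : K⟦X⟧ :=
  rescale x (qExpSeries z) * rescale y (qExpSeries z)

lemma coeff_qHermiteSeries (z x y : K) (n : ℕ) :
    coeff n (qHermiteSeries z x y) = ∑ p ∈ antidiagonal n,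
      x ^ p.1 * (qPochhammer z p.1)⁻¹ * (y ^ p.2 * (qPochhammer z p.2)⁻¹) := by
  simp only [qHermiteSeries, coeff_mul, coeff_rescale, qExpSeries, coeff_mk]

lemma rescale_qHermiteSeries (hz : ∀ n, z ^ (n + 1) ≠ 1) (x y : K) :
    rescale z (qHermiteSeries z x y) = (1 - C x * X) * (1 - C y * X) * qHermiteSeries z x y := by
  have hrescale (w : K) : rescale z (rescale w (qExpSeries z)) =
      (1 - C w * X) * rescale w (qExpSeries z) := by
    rw [rescale_rescale, mul_comm w, ← rescale_rescale, rescale_qExpSeries hz, map_mul, map_sub,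
      map_one, rescale_X]
  rw [qHermiteSeries, map_mul, hrescale, hrescale]
  ring

lemma coeff_qHermiteSeries_add_two (hz : ∀ n, z ^ (n + 1) ≠ 1) (x y : K) (n : ℕ) :
    (1 - z ^ (n + 2)) * coeff (n + 2) (qHermiteSeries z x y) =
      (x + y) * coeff (n + 1) (qHermiteSeries z x y) -
        x * y * coeff n (qHermiteSeries z x y) := by
  have hexpand : rescale z (qHermiteSeries z x y) = qHermiteSeries z x y -
      C (x + y) * (X * qHermiteSeries z x y) + C (x * y) * (X * (X * qHermiteSeries z x y)) := by
    rw [rescale_qHermiteSeries hz, map_add, map_mul]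
    ring
  have hcoeff := congrArg (coeff (n + 2)) hexpand
  rw [coeff_rescale, map_add, map_sub, coeff_C_mul, coeff_C_mul, coeff_succ_X_mul, coeff_succ_X_mul,
    coeff_succ_X_mul] at hcoeff
  linear_combination -hcoeff

end Algebra

section Folding

lemma sum_range_succ_eq_sum_fold {M : Type*} [AddCommMonoid M] (n : ℕ) (f : ℕ → M) :
    ∑ j ∈ range (n + 1), f j =
      ∑ j ∈ range (n / 2 + 1), if n - 2 * j = 0 then f j else f j + f (n - j) := by
  induction n using Nat.twoStepInduction generalizing f with
  | zero => simp
  | one => simp [sum_range_succ]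
  | more n ih _ =>
    rw [sum_range_succ, sum_range_succ', ih, show (n + 2) / 2 = n / 2 + 1 by omega,
      sum_range_succ' _ (n / 2 + 1), add_assoc]
    congr 1
    refine sum_congr rfl fun j hj => ?_
    have hj' : j ≤ n / 2 := mem_range_succ_iff.mp hj
    rw [show n + 2 - 2 * (j + 1) = n - 2 * j by omega,
      show n + 2 - (j + 1) = n - j + 1 by omega]

lemma Msym_sub_two_mul {Λ : ℂ} (hΛ : Λ ≠ 0) {n j : ℕ} (hj : 2 * j ≤ n) :
    Msym (n - 2 * j) Λ =
      if n - 2 * j = 0 then Λ ^ j * Λ⁻¹ ^ (n - j)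
      else Λ ^ j * Λ⁻¹ ^ (n - j) + Λ ^ (n - j) * Λ⁻¹ ^ j := by
  obtain ⟨r, rfl⟩ := Nat.exists_eq_add_of_le hj
  have hcancel : Λ ^ j * Λ⁻¹ ^ j = 1 := by rw [← mul_pow, mul_inv_cancel₀ hΛ, one_pow]
  rw [Nat.add_sub_cancel_left, show 2 * j + r - j = j + r by omega, Msym]
  split_ifs with hr
  · rw [hr, add_zero, hcancel]
  · rw [pow_add, pow_add]
    linear_combination (-Λ ^ r - Λ⁻¹ ^ r) * hcancel

end Folding

section QHermite

variable {q : ℝ} {Λ : ℂ}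

lemma PbarA1_eq_sum_range (q : ℝ) (n : ℕ) (Λ : ℂ) :
    PbarA1 q n Λ = ∑ j ∈ range (n / 2 + 1),
      (∏ i ∈ range j, (1 - (q : ℂ) ^ (n - i)) / (1 - (q : ℂ) ^ (i + 1))) *
        Msym (n - 2 * j) Λ := by
  rw [range_eq_Ico, sum_eq_sum_Ico_succ_bot (by omega)]
  simp only [PbarA1, range_zero, prod_empty, one_mul, mul_zero, Nat.sub_zero]
  rfl

lemma PbarA1_eq_qPochhammer_mul_coeff (hq : ∀ n, (q : ℂ) ^ (n + 1) ≠ 1) (hΛ : Λ ≠ 0) (n : ℕ) :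
    PbarA1 q n Λ = qPochhammer (q : ℂ) n * coeff n (qHermiteSeries (q : ℂ) Λ Λ⁻¹) := by
  rw [PbarA1_eq_sum_range, coeff_qHermiteSeries, Nat.sum_antidiagonal_eq_sum_range_succ (fun a b =>
    Λ ^ a * (qPochhammer (q : ℂ) a)⁻¹ * (Λ⁻¹ ^ b * (qPochhammer (q : ℂ) b)⁻¹)),
    Nat.succ_eq_add_one, sum_range_succ_eq_sum_fold n, mul_sum]
  refine sum_congr rfl fun j hj => ?_
  have hj' : j ≤ n / 2 := mem_range_succ_iff.mp hj
  rw [prod_range_qBinomial hq (by omega), Msym_sub_two_mul hΛ (by omega),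
    Nat.sub_sub_self (show j ≤ n by omega)]
  split_ifs <;> ring

lemma PbarA1_zero (q : ℝ) (Λ : ℂ) : PbarA1 q 0 Λ = 1 := by simp [PbarA1, Msym]

lemma PbarA1_one (q : ℝ) (Λ : ℂ) : PbarA1 q 1 Λ = Λ + Λ⁻¹ := by simp [PbarA1, Msym]

lemma PbarA1_add_two (hq : ∀ n, (q : ℂ) ^ (n + 1) ≠ 1) (hΛ : Λ ≠ 0) (n : ℕ) :
    PbarA1 q (n + 2) Λ =
      (Λ + Λ⁻¹) * PbarA1 q (n + 1) Λ - (1 - (q : ℂ) ^ (n + 1)) * PbarA1 q n Λ := by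
  have hrec := coeff_qHermiteSeries_add_two hq Λ Λ⁻¹ n
  rw [mul_inv_cancel₀ hΛ] at hrec
  simp only [PbarA1_eq_qPochhammer_mul_coeff hq hΛ, qPochhammer_succ]
  linear_combination qPochhammer (q : ℂ) n * (1 - (q : ℂ) ^ (n + 1)) * hrec

end QHermite

/-! ### Durfee's rectangle identity -/

lemma eq_of_tendsto_of_monotone_dist_succ {E : Type*} [MetricSpace E] {u : ℕ → E} {a : E}
    (hu : Tendsto u atTop (𝓝 a)) (hmono : Monotone fun n => dist (u n) (u (n + 1))) (n : ℕ) :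
    u n = a := by
  have hdist : Tendsto (fun n => dist (u n) (u (n + 1))) atTop (𝓝 0) := by
    have hshift : Tendsto (fun n => u (n + 1)) atTop (𝓝 a) := hu.comp (tendsto_add_atTop_nat 1)
    simpa only [dist_self] using hu.dist hshift
  have hsucc (n : ℕ) : u (n + 1) = u n :=
    (dist_le_zero.mp (hmono.ge_of_tendsto hdist n)).symm
  have hconst (k : ℕ) : u (k + n) = u n := by
    induction k with
    | zero => rw [zero_add]
    | succ k ih => rw [add_right_comm, hsucc, ih]
  exact tendsto_nhds_unique (tendsto_const_nhds.congr fun k => (hconst k).symm)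
    (hu.comp (tendsto_add_atTop_nat n))

section Durfee

variable {K : Type*} [NormedField K] {z : K}

lemma pow_succ_ne_one_of_norm_lt_one (hz : ‖z‖ < 1) (n : ℕ) : z ^ (n + 1) ≠ 1 := fun h => by
  have hlt : ‖z ^ (n + 1)‖ < 1 := by
    rw [norm_pow]
    exact pow_lt_one₀ (norm_nonneg z) hz n.succ_ne_zero
  rw [h, norm_one] at hlt
  exact lt_irrefl _ hlt

/-- The `k`-th term of the series that counts partitions by the size `k × (k + j)` of their Durfee
rectangle. -/
def durfeeTerm (z : K) (j k : ℕ) : K :=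
  z ^ (k * (k + j)) * ((qPochhammer z (k + j))⁻¹ * (qPochhammer z k)⁻¹)

variable [CompleteSpace K]

lemma tendsto_inv_qPochhammer (hz : ‖z‖ < 1) :
    Tendsto (fun n => (qPochhammer z n)⁻¹) atTop (𝓝 (∏' j : ℕ, (1 - z ^ (j + 1))⁻¹)) := by
  have hsum : Summable fun n : ℕ => ‖-z ^ (n + 1)‖ := by
    simpa only [norm_neg, norm_pow] using
      (summable_nat_add_iff 1).mpr (summable_geometric_of_lt_one (norm_nonneg z) hz)
  have hmul : Multipliable fun n : ℕ => 1 - z ^ (n + 1) := by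
    simpa only [← sub_eq_add_neg] using multipliable_one_add_of_summable hsum
  have hne : ∏' n : ℕ, (1 - z ^ (n + 1)) ≠ 0 := by
    simpa only [← sub_eq_add_neg] using tprod_one_add_ne_zero_of_summable
      (fun n => by simpa only [← sub_eq_add_neg, sub_ne_zero] using
        (pow_succ_ne_one_of_norm_lt_one hz n).symm) hsum
  simpa only [qPochhammer, prod_inv_distrib] using (hmul.inv₀ hne).tendsto_prod_tprod_nat

lemma exists_norm_inv_qPochhammer_le (hz : ‖z‖ < 1) : ∃ C, ∀ n, ‖(qPochhammer z n)⁻¹‖ ≤ C := by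
  obtain ⟨C, hC⟩ := (tendsto_inv_qPochhammer hz).norm.bddAbove_range
  exact ⟨C, fun n => hC ⟨n, rfl⟩⟩

lemma exists_norm_coeff_qHermiteSeries_le (hz : ‖z‖ < 1) (x y : K) :
    ∃ C, ∀ n, ‖coeff n (qHermiteSeries z x y)‖ ≤ C * (‖x‖ + ‖y‖) ^ n := by
  obtain ⟨C, hC⟩ := exists_norm_inv_qPochhammer_le hz
  have hC₀ : 0 ≤ C := (norm_nonneg _).trans (hC 0)
  refine ⟨C * C, fun n => ?_⟩
  rw [coeff_qHermiteSeries, (Commute.all _ _).add_pow', mul_sum]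
  refine norm_sum_le_of_le _ fun p hp => ?_
  have hchoose : (1 : ℝ) ≤ n.choose p.1 := by
    exact_mod_cast Nat.choose_pos (Nat.le_of_add_right_le (mem_antidiagonal.mp hp).le)
  rw [norm_mul, norm_mul, norm_mul, norm_pow, norm_pow, nsmul_eq_mul]
  calc ‖x‖ ^ p.1 * ‖(qPochhammer z p.1)⁻¹‖ * (‖y‖ ^ p.2 * ‖(qPochhammer z p.2)⁻¹‖)
      ≤ ‖x‖ ^ p.1 * C * (‖y‖ ^ p.2 * C) := by gcongr <;> exact hC _
    _ = 1 * (C * C * (‖x‖ ^ p.1 * ‖y‖ ^ p.2)) := by ring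
    _ ≤ n.choose p.1 * (C * C * (‖x‖ ^ p.1 * ‖y‖ ^ p.2)) := by gcongr
    _ = C * C * (n.choose p.1 * (‖x‖ ^ p.1 * ‖y‖ ^ p.2)) := by ring

lemma exists_norm_durfeeTerm_le (hz : ‖z‖ < 1) :
    ∃ C, 0 ≤ C ∧ ∀ j k, ‖durfeeTerm z j k‖ ≤ ‖z‖ ^ k * C := by
  obtain ⟨C, hC⟩ := exists_norm_inv_qPochhammer_le hz
  have hC₀ : 0 ≤ C := (norm_nonneg _).trans (hC 0)
  refine ⟨C * C, by positivity, fun j k => ?_⟩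
  have hexp : k ≤ k * (k + j) :=
    (Nat.le_mul_self k).trans (Nat.mul_le_mul_left k (k.le_add_right j))
  have hpow : ‖z‖ ^ (k * (k + j)) ≤ ‖z‖ ^ k := pow_le_pow_of_le_one (norm_nonneg z) hz.le hexp
  rw [durfeeTerm, norm_mul, norm_mul, norm_pow]
  gcongr <;> exact hC _

lemma summable_durfeeTerm (hz : ‖z‖ < 1) (j : ℕ) : Summable (durfeeTerm z j) := by
  obtain ⟨C, -, hC⟩ := exists_norm_durfeeTerm_le hz
  exact .of_norm_bounded ((summable_geometric_of_lt_one (norm_nonneg z) hz).mul_right C) (hC j)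

lemma tendsto_durfeeTerm_succ (hz : ‖z‖ < 1) (k : ℕ) :
    Tendsto (fun j => durfeeTerm z j (k + 1)) atTop (𝓝 0) := by
  have hexp : Tendsto (fun j => (k + 1) * (k + 1 + j)) atTop atTop :=
    tendsto_atTop_mono
      (fun j => (j.le_add_left (k + 1)).trans (Nat.le_mul_of_pos_left _ k.succ_pos)) tendsto_id
  have hpow : Tendsto (fun j => z ^ ((k + 1) * (k + 1 + j))) atTop (𝓝 0) :=
    (tendsto_pow_atTop_nhds_zero_of_norm_lt_one hz).comp hexp
  have hinv : Tendsto (fun j => (qPochhammer z (k + 1 + j))⁻¹) atTop _ :=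
    (tendsto_inv_qPochhammer hz).comp (tendsto_atTop_mono (fun j => j.le_add_left _) tendsto_id)
  simpa only [durfeeTerm, zero_mul] using hpow.mul (hinv.mul_const (qPochhammer z (k + 1))⁻¹)

lemma tendsto_tsum_durfeeTerm (hz : ‖z‖ < 1) :
    Tendsto (fun j => ∑' k, durfeeTerm z j k) atTop (𝓝 (∏' i : ℕ, (1 - z ^ (i + 1))⁻¹)) := by
  obtain ⟨C, -, hC⟩ := exists_norm_durfeeTerm_le hz
  have hlim (k : ℕ) : Tendsto (fun j => durfeeTerm z j k) atTop
      (𝓝 (if k = 0 then ∏' i : ℕ, (1 - z ^ (i + 1))⁻¹ else 0)) := by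
    cases k with
    | zero => simpa [durfeeTerm, qPochhammer_zero] using tendsto_inv_qPochhammer hz
    | succ k => simpa using tendsto_durfeeTerm_succ hz k
  simpa only [tsum_ite_eq] using tendsto_tsum_of_dominated_convergence
    ((summable_geometric_of_lt_one (norm_nonneg z) hz).mul_right C) hlim (.of_forall hC)

lemma tsum_durfeeTerm_sub (hz : ‖z‖ < 1) (j : ℕ) :
    ∑' k, durfeeTerm z j k - ∑' k, durfeeTerm z (j + 1) k =
      z ^ (j + 1) * (∑' k, durfeeTerm z (j + 2) k - ∑' k, durfeeTerm z (j + 1) k) := by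
  have hsum (i : ℕ) := (summable_durfeeTerm hz i).hasSum
  have hone (n : ℕ) : 1 - z ^ (n + 1) ≠ 0 :=
    sub_ne_zero.mpr (pow_succ_ne_one_of_norm_lt_one hz n).symm
  have hne := qPochhammer_ne_zero (pow_succ_ne_one_of_norm_lt_one hz)
  have hshift : HasSum (fun k => z ^ (k * (k + j)) * (1 - z ^ k) *
      ((qPochhammer z (k + j + 1))⁻¹ * (qPochhammer z k)⁻¹))
      (z ^ (j + 1) * ∑' k, durfeeTerm z (j + 2) k) := by
    rw [← hasSum_nat_add_iff' 1]
    simp only [sum_range_one, pow_zero, sub_self, mul_zero, zero_mul, sub_zero]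
    refine ((hsum (j + 2)).mul_left (z ^ (j + 1))).congr_fun fun k => ?_
    have := hne k
    have := hone k
    rw [durfeeTerm, show k + 1 + j + 1 = k + (j + 2) by omega, qPochhammer_succ z k]
    field_simp
    ring
  refine (((hsum j).sub (hsum (j + 1))).unique ?_).trans (mul_sub _ _ _).symm
  refine (hshift.sub ((hsum (j + 1)).mul_left (z ^ (j + 1)))).congr_fun fun k => ?_
  have := hne (k + j)
  have := hone (k + j)
  rw [durfeeTerm, durfeeTerm, ← add_assoc, qPochhammer_succ]
  field_simp
  ring

theorem tsum_durfeeTerm (hz : ‖z‖ < 1) (j : ℕ) :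
    ∑' k, durfeeTerm z j k = ∏' i : ℕ, (1 - z ^ (i + 1))⁻¹ := by
  refine eq_of_tendsto_of_monotone_dist_succ (tendsto_tsum_durfeeTerm hz)
    (monotone_nat_of_le_succ fun j => ?_) j
  rw [dist_eq_norm, dist_eq_norm', tsum_durfeeTerm_sub hz j, norm_mul, norm_pow]
  exact mul_le_of_le_one_left (norm_nonneg _) (pow_le_one₀ (norm_nonneg z) hz.le)

end Durfee

/-! ### Gaussian sums of power series -/

section Gaussian

variable {q : ℝ}

/-- The Gaussian `q ^ (s² / 4)`, cast to `ℂ`. -/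
def qGaussian (q s : ℝ) : ℂ := ((q ^ (s ^ 2 / 4) : ℝ) : ℂ)

lemma qGaussian_add (hq0 : 0 < q) (s t : ℝ) :
    qGaussian q (s + t) = qGaussian q s * qGaussian q t * ((q ^ (s * t / 2) : ℝ) : ℂ) := by
  simp only [qGaussian, ← Complex.ofReal_mul, ← Real.rpow_add hq0]
  ring_nf

lemma qGaussian_add_eq_qGaussian_sub_mul (hq0 : 0 < q) (s t : ℝ) :
    qGaussian q (s + t) = qGaussian q (s - t) * ((q ^ (s * t) : ℝ) : ℂ) := by
  simp only [qGaussian, ← Complex.ofReal_mul, ← Real.rpow_add hq0]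
  ring_nf

lemma summable_norm_qGaussian_sub_mul_zpow (hq0 : 0 < q) (hq1 : q < 1) (t : ℝ) {A : ℝ}
    (hA : 0 < A) : Summable fun j : ℤ => ‖qGaussian q (j - t)‖ * A ^ j := by
  have hτ : 0 < -Real.log q / (4 * Real.pi) :=
    div_pos (neg_pos.mpr (Real.log_neg hq0 hq1)) (by positivity)
  have htheta := (summable_jacobiTheta₂_term_iff
    (((t * Real.log q / 2 - Real.log A) / (2 * Real.pi) : ℝ) * Complex.I)
    ((-Real.log q / (4 * Real.pi) : ℝ) * Complex.I)).mpr (by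
      rwa [Complex.im_ofReal_mul, Complex.I_im, mul_one])
  refine (htheta.norm.mul_left (q ^ (t ^ 2 / 4))).congr fun j => ?_
  have hπ := Real.pi_ne_zero
  rw [norm_jacobiTheta₂_term, Complex.im_ofReal_mul, Complex.im_ofReal_mul, Complex.I_im, qGaussian,
    Complex.norm_real, Real.norm_of_nonneg (by positivity), ← Real.rpow_intCast A,
    Real.rpow_def_of_pos hq0, Real.rpow_def_of_pos hq0, Real.rpow_def_of_pos hA, ← Real.exp_add,
    ← Real.exp_add]
  congr 1
  field_simp
  ring

/-- The sum `∑ q^((n - t)²/4) fₙ` of the coefficients of `f` against the Gaussian centred at `t`;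
it is only meaningful where the series is summable. -/
def gaussianSum (q t : ℝ) (f : ℂ⟦X⟧) : ℂ := ∑' n : ℕ, qGaussian q (n - t) * coeff n f

lemma summable_qGaussian_mul_coeff (hq0 : 0 < q) (hq1 : q < 1) {f : ℂ⟦X⟧} {A C : ℝ} (hA : 0 < A)
    (hf : ∀ n, ‖coeff n f‖ ≤ C * A ^ n) (t : ℝ) :
    Summable fun n : ℕ => qGaussian q (n - t) * coeff n f := by
  have hnat : Summable fun n : ℕ => ‖qGaussian q (n - t)‖ * A ^ n := by
    simpa [Function.comp_def] using
      (summable_norm_qGaussian_sub_mul_zpow hq0 hq1 t hA).comp_injective Nat.cast_injective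
  refine .of_norm_bounded (hnat.mul_left C) fun n => ?_
  calc ‖qGaussian q (n - t) * coeff n f‖ ≤ ‖qGaussian q (n - t)‖ * (C * A ^ n) := by
        rw [norm_mul]
        gcongr
        exact hf n
    _ = C * (‖qGaussian q (n - t)‖ * A ^ n) := by ring

lemma hasSum_qGaussian_mul_coeff_X_mul {f : ℂ⟦X⟧} {t : ℝ} {a : ℂ}
    (h : HasSum (fun n : ℕ => qGaussian q (n - t) * coeff n f) a) :
    HasSum (fun n : ℕ => qGaussian q (n - (t + 1)) * coeff n (X * f)) a := by
  rw [← hasSum_nat_add_iff' 1]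
  simpa [coeff_succ_X_mul] using h

lemma hasSum_qGaussian_mul_coeff_rescale (hq0 : 0 < q) {f : ℂ⟦X⟧} {t : ℝ} {a : ℂ}
    (h : HasSum (fun n : ℕ => qGaussian q (n - (t - 1)) * coeff n f) a) :
    HasSum (fun n : ℕ => qGaussian q (n - (t + 1)) * coeff n (rescale (q : ℂ) f))
      (((q ^ t : ℝ) : ℂ) * a) := by
  refine (h.mul_left ((q ^ t : ℝ) : ℂ)).congr_fun fun n => ?_
  have hgauss : qGaussian q (n - (t - 1)) =
      qGaussian q (n - (t + 1)) * ((q ^ ((n - t) * 1) : ℝ) : ℂ) := by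
    convert qGaussian_add_eq_qGaussian_sub_mul hq0 (n - t) 1 using 3 <;> ring
  have hpow : (q : ℂ) ^ n = ((q ^ t : ℝ) : ℂ) * ((q ^ ((n - t) * 1) : ℝ) : ℂ) := by
    rw [← Complex.ofReal_mul, ← Real.rpow_add hq0, mul_one, add_sub_cancel, Real.rpow_natCast,
      Complex.ofReal_pow]
  rw [coeff_rescale, hgauss, hpow]
  ring

lemma gaussianSum_add_one (hq0 : 0 < q) {f : ℂ⟦X⟧} {a b : ℂ}
    (hsum : ∀ t : ℝ, Summable fun n : ℕ => qGaussian q (n - t) * coeff n f)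
    (hf : rescale (q : ℂ) f = (1 - C a * X) * (1 - C b * X) * f) (t : ℝ) :
    gaussianSum q (t + 1) f =
      (a + b) * gaussianSum q t f - (a * b - ((q ^ t : ℝ) : ℂ)) * gaussianSum q (t - 1) f := by
  have hhas (s : ℝ) : HasSum (fun n : ℕ => qGaussian q (n - s) * coeff n f) (gaussianSum q s f) :=
    (hsum s).hasSum
  have hX := hasSum_qGaussian_mul_coeff_X_mul (hhas t)
  have hXX : HasSum (fun n : ℕ => qGaussian q (n - (t + 1)) * coeff n (X * (X * f)))
      (gaussianSum q (t - 1) f) := by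
    have h := hasSum_qGaussian_mul_coeff_X_mul (hhas (t - 1))
    rw [sub_add_cancel] at h
    exact hasSum_qGaussian_mul_coeff_X_mul h
  have hexpand : rescale (q : ℂ) f = f - C (a + b) * (X * f) + C (a * b) * (X * (X * f)) := by
    rw [hf, map_add, map_mul]
    ring
  have hright := ((hhas (t + 1)).sub (hX.mul_left (a + b))).add (hXX.mul_left (a * b))
  have hleft := hasSum_qGaussian_mul_coeff_rescale hq0 (hhas (t - 1))
  have heq := hleft.unique (hright.congr_fun fun n => by
    rw [hexpand, map_add, map_sub, coeff_C_mul, coeff_C_mul]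
    ring)
  linear_combination -heq

end Gaussian

/-! ### The Gaussian sum centred at the origin -/

lemma hasSum_sum_antidiagonal {A M : Type*} [AddMonoid A] [HasAntidiagonal A] [AddCommMonoid M]
    [TopologicalSpace M] [ContinuousAdd M] [RegularSpace M] {f : A × A → M} {a : M}
    (h : HasSum f a) : HasSum (fun n => ∑ p ∈ antidiagonal n, f p) a := by
  refine ((HasAntidiagonal.sigmaAntidiagonalEquivProd.hasSum_iff.mpr h).sigma
    fun n => hasSum_fintype _).congr_fun fun n => ?_
  exact (sum_coe_sort (antidiagonal n) f).symm

/-- A pair of natural numbers is determined by its difference and its minimum. -/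
def natProdEquivSubMin : ℕ × ℕ ≃ ℤ × ℕ where
  toFun p := ((p.1 : ℤ) - p.2, min p.1 p.2)
  invFun x := (x.1.toNat + x.2, (-x.1).toNat + x.2)
  left_inv p := Prod.ext (by simp) (by simp; omega)
  right_inv x := Prod.ext (by simp) (by simp; omega)

section Theta

variable {q : ℝ} {Λ : ℂ}

lemma norm_ofReal_lt_one (hq0 : 0 < q) (hq1 : q < 1) : ‖(q : ℂ)‖ < 1 := by
  rwa [Complex.norm_real, Real.norm_of_nonneg hq0.le]

lemma hasSum_theta_mul_durfeeTerm (hq0 : 0 < q) (hq1 : q < 1) (hΛ : Λ ≠ 0) :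
    HasSum (fun x : ℤ × ℕ => qGaussian q x.1 * Λ ^ x.1 * durfeeTerm (q : ℂ) x.1.natAbs x.2)
      (thetaA1 q Λ * ∏' i : ℕ, (1 - (q : ℂ) ^ (i + 1))⁻¹) := by
  have hq := norm_ofReal_lt_one hq0 hq1
  obtain ⟨C, hC₀, hC⟩ := exists_norm_durfeeTerm_le hq
  have htheta : Summable fun j : ℤ => ‖qGaussian q j * Λ ^ j‖ := by
    simpa using summable_norm_qGaussian_sub_mul_zpow hq0 hq1 0 (norm_pos_iff.mpr hΛ)
  have hsum : Summable fun x : ℤ × ℕ =>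
      qGaussian q x.1 * Λ ^ x.1 * durfeeTerm (q : ℂ) x.1.natAbs x.2 := by
    refine .of_norm_bounded (htheta.mul_of_nonneg
      ((summable_geometric_of_lt_one (norm_nonneg (q : ℂ)) hq).mul_right C)
      (fun _ => norm_nonneg _) fun _ => by positivity) fun x => ?_
    rw [norm_mul]
    gcongr
    exact hC _ _
  have hfiber := hsum.hasSum.prod_fiberwise fun j =>
    (summable_durfeeTerm hq j.natAbs).hasSum.mul_left (qGaussian q j * Λ ^ j)
  simp only [tsum_durfeeTerm hq] at hfiber
  have hvalue := hfiber.unique (htheta.of_norm.hasSum.mul_right _)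
  exact hvalue ▸ hsum.hasSum

lemma qGaussian_mul_pow_mul_inv_pow (hq0 : 0 < q) (hΛ : Λ ≠ 0) (a b : ℕ) :
    qGaussian q (a + b) * (Λ ^ a * (qPochhammer (q : ℂ) a)⁻¹ *
        (Λ⁻¹ ^ b * (qPochhammer (q : ℂ) b)⁻¹)) =
      qGaussian q ((a - b : ℤ) : ℝ) * Λ ^ (a - b : ℤ) *
        durfeeTerm (q : ℂ) (a - b : ℤ).natAbs (min a b) := by
  have hpow : Λ ^ (a - b : ℤ) = Λ ^ a * Λ⁻¹ ^ b := by
    rw [zpow_sub₀ hΛ, zpow_natCast, zpow_natCast, inv_pow, div_eq_mul_inv]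
  have hgauss : qGaussian q (a + b) = qGaussian q ((a - b : ℤ) : ℝ) * (q : ℂ) ^ (a * b) := by
    rw [qGaussian_add_eq_qGaussian_sub_mul hq0, ← Nat.cast_mul, Real.rpow_natCast]
    push_cast
    rfl
  have hdurfee : durfeeTerm (q : ℂ) (a - b : ℤ).natAbs (min a b) =
      (q : ℂ) ^ (a * b) * ((qPochhammer (q : ℂ) a)⁻¹ * (qPochhammer (q : ℂ) b)⁻¹) := by
    rcases le_total a b with h | h
    · rw [durfeeTerm, min_eq_left h, show a + (a - b : ℤ).natAbs = b by omega,
        mul_comm (qPochhammer (q : ℂ) a)⁻¹]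
    · rw [durfeeTerm, min_eq_right h, show b + (a - b : ℤ).natAbs = a by omega, mul_comm a b]
  rw [hpow, hgauss, hdurfee]
  ring

lemma gaussianSum_zero_qHermiteSeries (hq0 : 0 < q) (hq1 : q < 1) (hΛ : Λ ≠ 0) :
    gaussianSum q 0 (qHermiteSeries (q : ℂ) Λ Λ⁻¹) =
      thetaA1 q Λ * ∏' i : ℕ, (1 - (q : ℂ) ^ (i + 1))⁻¹ := by
  have hpairs : HasSum (fun p : ℕ × ℕ => qGaussian q (p.1 + p.2) *
      (Λ ^ p.1 * (qPochhammer (q : ℂ) p.1)⁻¹ * (Λ⁻¹ ^ p.2 * (qPochhammer (q : ℂ) p.2)⁻¹)))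
      (thetaA1 q Λ * ∏' i : ℕ, (1 - (q : ℂ) ^ (i + 1))⁻¹) :=
    (natProdEquivSubMin.hasSum_iff.mpr (hasSum_theta_mul_durfeeTerm hq0 hq1 hΛ)).congr_fun
      fun p => qGaussian_mul_pow_mul_inv_pow hq0 hΛ p.1 p.2
  refine ((hasSum_sum_antidiagonal hpairs).congr_fun fun n => ?_).tsum_eq
  rw [coeff_qHermiteSeries, mul_sum, sub_zero]
  refine sum_congr rfl fun p hp => ?_
  rw [← mem_antidiagonal.mp hp, Nat.cast_add]

lemma gaussianSum_natCast_qHermiteSeries (hq0 : 0 < q) (hq1 : q < 1) (hΛ : Λ ≠ 0) (n : ℕ) :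
    gaussianSum q n (qHermiteSeries (q : ℂ) Λ Λ⁻¹) =
      PbarA1 q n Λ * gaussianSum q 0 (qHermiteSeries (q : ℂ) Λ Λ⁻¹) := by
  have hq := norm_ofReal_lt_one hq0 hq1
  have hroot := pow_succ_ne_one_of_norm_lt_one hq
  obtain ⟨C, hC⟩ := exists_norm_coeff_qHermiteSeries_le hq Λ Λ⁻¹
  have hA : 0 < ‖Λ‖ + ‖Λ⁻¹‖ := add_pos_of_pos_of_nonneg (norm_pos_iff.mpr hΛ) (norm_nonneg _)
  have hrec := gaussianSum_add_one hq0 (summable_qGaussian_mul_coeff hq0 hq1 hA hC)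
    (rescale_qHermiteSeries hroot Λ Λ⁻¹)
  rw [mul_inv_cancel₀ hΛ] at hrec
  induction n using Nat.twoStepInduction with
  | zero => rw [Nat.cast_zero, PbarA1_zero, one_mul]
  | one =>
    have h := hrec 0
    rwa [Real.rpow_zero, Complex.ofReal_one, sub_self, zero_mul, sub_zero, zero_add, ← PbarA1_one q,
      ← Nat.cast_one] at h
  | more n ih₀ ih₁ =>
    have h := hrec (n + 1 : ℕ)
    rw [ih₁, Real.rpow_natCast, Nat.cast_add_one n, add_sub_cancel_right, ih₀, add_assoc,
      one_add_one_eq_two, Complex.ofReal_pow] at h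
    rw [Nat.cast_add, Nat.cast_ofNat, h, PbarA1_add_two hroot hΛ]
    ring

lemma qGaussian_mul_whitA1 (hq0 : 0 < q) (hq1 : q < 1) (hΛ : Λ ≠ 0) (t : ℝ) :
    qGaussian q t * whitA1 q ((q ^ (-t / 2) : ℝ) : ℂ) Λ =
      gaussianSum q t (qHermiteSeries (q : ℂ) Λ Λ⁻¹) := by
  have hroot := pow_succ_ne_one_of_norm_lt_one (norm_ofReal_lt_one hq0 hq1)
  rw [whitA1, gaussianSum, ← tsum_mul_left]
  refine tsum_congr fun m => ?_
  have hprod : ∏ j ∈ Icc 1 m, (1 - (q : ℂ) ^ j) = qPochhammer (q : ℂ) m := by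
    rw [qPochhammer, range_eq_Ico, prod_Ico_add' (fun j => 1 - (q : ℂ) ^ j) 0 m 1]
    rfl
  have hsquare : qGaussian q (m - t) =
      qGaussian q t * (qGaussian q m * ((q ^ (-t / 2) : ℝ) : ℂ) ^ m) := by
    rw [sub_eq_add_neg, qGaussian_add hq0, ← Complex.ofReal_pow, ← Real.rpow_mul_natCast hq0.le]
    simp only [qGaussian, neg_sq]
    ring_nf
  have hne := qPochhammer_ne_zero hroot m
  rw [hprod, hsquare, PbarA1_eq_qPochhammer_mul_coeff hroot hΛ, mul_left_comm _ (qPochhammer _ m),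
    mul_div_cancel_left₀ _ hne, qGaussian, qGaussian]
  ring

end Theta

end

/-- the Shintani–Casselman–Shalika-type identity of type A₁. -/
theorem shintani_A1 (q : ℝ) (hq0 : 0 < q) (hq1 : q < 1) (n : ℕ) (Λ : ℂ) (hΛ : Λ ≠ 0) :
    ((q ^ ((n : ℝ) ^ 2 / 4) : ℝ) : ℂ) *
      whitA1 q (((q ^ (-(n : ℝ) / 2) : ℝ) : ℂ)) Λ =
    thetaA1 q Λ * PbarA1 q n Λ * ∏' j : ℕ, (1 - (q : ℂ) ^ (j + 1))⁻¹ := by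
  have hsum := qGaussian_mul_whitA1 hq0 hq1 hΛ n
  rw [gaussianSum_natCast_qHermiteSeries hq0 hq1 hΛ,
    gaussianSum_zero_qHermiteSeries hq0 hq1 hΛ] at hsum
  rw [mul_assoc, mul_left_comm, ← hsum, qGaussian]

end
end

section
/- Fix real numbers q and s with 0 < q < 1 and 0 < s < 1 and set t = s². For every integer n ≥ 0, put Λ₀ = q^{−n/2} s^{−1}. Then for every X ∈ ℂ with X ≠ 0 the q,t-Shintani (evaluation) formula of type A₁ holds: θ(s) · Ψ_t(X, Λ₀) = θ(X) · θ(Λ₀) · ( P_n(X; q, t) / P_n(s; q, t) ) · ∏_{j=1}^∞ (1 − t qʲ)/(1 − qʲ). (Formula (3.33) of the paper in the rank-one case.) -/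
open scoped BigOperators
open Filter

noncomputable section

/-! Normalise `P_n` to `R_n = (t; q)_n / (q; q)_n * P_n`, whose generating series is a product of
two `q`-binomial series. The functional equation of the `q`-binomial series gives the three-term
recurrence of `R_n` in `n` and difference equations of `R_n(Y)` under `Y ↦ q ^ (± 1 / 2) * Y`. At
the node `Y = q ^ (m / 2) * s` the latter become the three-term recurrence in `m`, which is the
duality `R_n(q ^ (m / 2) * s) * R_m(s) = R_m(q ^ (n / 2) * s) * R_n(s)`. By duality, the spherical
function at `Λ₀` is, up to the factor `(1 - t) * R_n(s)`, the Gaussian sum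
`J_n = ∑ q ^ (m ^ 2 / 4) * (1 - t * q ^ m) * R_m(X) * R_n(q ^ (m / 2) * s)`.

Moving multiplication by `X + X⁻¹` from `R_m(X)` across the Gaussian turns it into the difference
operator twisted by the Gaussian, under which `q ^ (n ^ 2 / 4) * s ^ n * R_n` obeys the three-term
recurrence in `n`. So `q ^ (n ^ 2 / 4) * s ^ n * J_n = J_0 * R_n(X)`. The coefficient of `X ^ k`
in `J_0`, divided by `q ^ (k ^ 2 / 4)`, does not depend on `k`, by telescoping, and tends to
`(t; q)_∞ / (q; q)_∞` as `k → ∞`; hence `J_0` is a multiple of `θ(X)`. The remaining factor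
`q ^ (n ^ 2 / 4) * s ^ n` is the quasi-period `θ(s) / θ(Λ₀)`. -/

namespace QTShintani

open Finset PowerSeries

section Algebra

variable {K : Type*} [Field K] {q t : K}

/-- The ratio `(t; q)_n / (q; q)_n` of `q`-Pochhammer symbols, which is the `n`-th coefficient of
the `q`-binomial series. -/
def qPochRatio (q t : K) (n : ℕ) : K :=
  ∏ j ∈ range n, (1 - t * q ^ j) / (1 - q ^ (j + 1))

@[simp]
lemma qPochRatio_zero (q t : K) : qPochRatio q t 0 = 1 := prod_range_zero _

lemma qPochRatio_succ (t : K) {n : ℕ} (hq : 1 - q ^ (n + 1) ≠ 0) :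
    (1 - q ^ (n + 1)) * qPochRatio q t (n + 1) = (1 - t * q ^ n) * qPochRatio q t n := by
  rw [qPochRatio, prod_range_succ, ← qPochRatio]
  field_simp

lemma qPochRatio_ne_zero (hq : ∀ i : ℕ, 1 - q ^ (i + 1) ≠ 0) (ht : ∀ i : ℕ, 1 - t * q ^ i ≠ 0)
    (n : ℕ) : qPochRatio q t n ≠ 0 :=
  prod_ne_zero_iff.2 fun j _ => div_ne_zero (ht j) (hq j)

lemma one_sub_mul_pow_mul_qPochRatio (q t : K) (n : ℕ) :
    (1 - t * q ^ n) * qPochRatio q t n =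
      (1 - t) * ∏ j ∈ range n, (1 - t * q ^ (j + 1)) / (1 - q ^ (j + 1)) := by
  rw [qPochRatio, prod_div_distrib, prod_div_distrib, mul_div_assoc', mul_div_assoc', mul_comm,
    ← prod_range_succ (fun j => 1 - t * q ^ j), prod_range_succ', pow_zero, mul_one, mul_comm]

lemma prod_sphericalCoeff (hq : ∀ i : ℕ, 1 - q ^ (i + 1) ≠ 0) (ht : ∀ i : ℕ, 1 - t ^ 2 * q ^ i ≠ 0)
    (n : ℕ) :
    (1 - t) * qPochRatio q (t ^ 2) n *
        ∏ i ∈ range n, (1 - t * q ^ i) * (1 - t * q ^ (i + 1)) /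
          ((1 - t ^ 2 * q ^ i) * (1 - q ^ (i + 1))) =
      (1 - t * q ^ n) * qPochRatio q t n ^ 2 := by
  have hsplit : qPochRatio q (t ^ 2) n *
      ∏ i ∈ range n, (1 - t * q ^ i) * (1 - t * q ^ (i + 1)) /
        ((1 - t ^ 2 * q ^ i) * (1 - q ^ (i + 1))) =
      qPochRatio q t n * ∏ i ∈ range n, (1 - t * q ^ (i + 1)) / (1 - q ^ (i + 1)) := by
    simp only [qPochRatio, ← prod_mul_distrib]
    refine prod_congr rfl fun i _ => ?_
    have := hq i
    have := ht i
    field_simp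
  linear_combination (1 - t) * hsplit - qPochRatio q t n * one_sub_mul_pow_mul_qPochRatio q t n

/-- The `q`-binomial series `∑ (t; q)_n / (q; q)_n zⁿ`. -/
def qBinomialSeries (q t : K) : K⟦X⟧ := PowerSeries.mk (qPochRatio q t)

/-- The Rogers polynomials normalised by their generating series, that is
`∑ R_n(Y) zⁿ = ∏ (1 - t Y qⁱ z) (1 - t Y⁻¹ qⁱ z) / ((1 - Y qⁱ z) (1 - Y⁻¹ qⁱ z))`.
The leading coefficient of `R_n` is `(t; q)_n / (q; q)_n`. -/
def rogers (q t : K) (n : ℕ) (Y : K) : K :=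
  ∑ x ∈ antidiagonal n, qPochRatio q t x.1 * qPochRatio q t x.2 * (Y ^ x.1 * Y⁻¹ ^ x.2)

/-- The generating series of the Rogers polynomials. -/
def rogersSeries (q t Y : K) : K⟦X⟧ := PowerSeries.mk fun n => rogers q t n Y

@[simp]
lemma rogers_zero (q t Y : K) : rogers q t 0 Y = 1 := by simp [rogers]

lemma rogers_inv (q t : K) (n : ℕ) (Y : K) : rogers q t n Y⁻¹ = rogers q t n Y := by
  unfold rogers
  rw [← Finset.Nat.sum_antidiagonal_swap]
  refine sum_congr rfl fun x _ => ?_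
  simp only [Prod.fst_swap, Prod.snd_swap, inv_inv]
  ring

lemma rescale_qBinomialSeries (hq : ∀ i : ℕ, 1 - q ^ (i + 1) ≠ 0) (t a : K) :
    (1 - C a * X) * rescale a (qBinomialSeries q t) =
      (1 - C (t * a) * X) * rescale (q * a) (qBinomialSeries q t) := by
  ext n
  cases n with
  | zero => simp [sub_mul, mul_assoc, qBinomialSeries, rescale_mk]
  | succ n =>
    simp only [sub_mul, one_mul, mul_assoc, map_sub, coeff_C_mul, coeff_succ_X_mul, coeff_rescale,
      qBinomialSeries, coeff_mk]
    linear_combination a ^ (n + 1) * qPochRatio_succ t (hq n)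

lemma rogersSeries_eq_mul (q t Y : K) :
    rogersSeries q t Y =
      rescale Y (qBinomialSeries q t) * rescale Y⁻¹ (qBinomialSeries q t) := by
  ext n
  simp only [rogersSeries, rogers, qBinomialSeries, rescale_mk, coeff_mul, coeff_mk]
  exact sum_congr rfl fun x _ => by ring

lemma rescale_rogersSeries (a q t Y : K) :
    rescale a (rogersSeries q t Y) =
      rescale (a * Y) (qBinomialSeries q t) * rescale (a * Y⁻¹) (qBinomialSeries q t) := by
  simp only [rogersSeries_eq_mul, map_mul, rescale_rescale, mul_comm a]

section HalfShift

variable (hq : ∀ i : ℕ, 1 - q ^ (i + 1) ≠ 0) (t) {Y : K} (hY : Y ≠ 0)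
include hq

lemma rogersSeries_halfShift_left (Y : K) :
    (1 - C Y * X) *
        (rescale Y (qBinomialSeries q t) * rescale (q * Y⁻¹) (qBinomialSeries q t)) =
      (1 - C (t * Y) * X) * rescale q (rogersSeries q t Y) := by
  rw [rescale_rogersSeries]
  linear_combination rescale (q * Y⁻¹) (qBinomialSeries q t) * rescale_qBinomialSeries hq t Y

include hY

lemma rogersSeries_halfShift_right :
    (C Y - X) * rogersSeries q t Y =
      (C Y - C t * X) *
        (rescale Y (qBinomialSeries q t) * rescale (q * Y⁻¹) (qBinomialSeries q t)) := by
  have hC : C Y * C Y⁻¹ = (1 : K⟦X⟧) := by rw [← map_mul, mul_inv_cancel₀ hY, map_one]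
  have h := rescale_qBinomialSeries hq t Y⁻¹
  rw [map_mul] at h
  rw [rogersSeries_eq_mul]
  linear_combination C Y * rescale Y (qBinomialSeries q t) * h +
    X * rescale Y (qBinomialSeries q t) * (rescale Y⁻¹ (qBinomialSeries q t) -
      C t * rescale (q * Y⁻¹) (qBinomialSeries q t)) * hC

lemma rogersSeries_halfShift :
    C (t - Y ^ 2) *
        (X * (rescale Y (qBinomialSeries q t) * rescale (q * Y⁻¹) (qBinomialSeries q t))) =
      C Y * rescale q (rogersSeries q t Y) -
        C (t * Y ^ 2) * (X * rescale q (rogersSeries q t Y)) -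
        C Y * rogersSeries q t Y + X * rogersSeries q t Y := by
  have hleft := rogersSeries_halfShift_left t hq Y
  have hright := rogersSeries_halfShift_right t hq hY
  simp only [map_sub, map_mul, map_pow] at *
  linear_combination C Y * hleft + hright

lemma rogersSeries_qShift :
    rogersSeries q t Y - C (Y + Y⁻¹) * (X * rogersSeries q t Y) +
        X * (X * rogersSeries q t Y) =
      rescale q (rogersSeries q t Y) - C (t * (Y + Y⁻¹)) * (X * rescale q (rogersSeries q t Y)) +
        C (t ^ 2) * (X * (X * rescale q (rogersSeries q t Y))) := by
  have hC : C Y * C Y⁻¹ = (1 : K⟦X⟧) := by rw [← map_mul, mul_inv_cancel₀ hY, map_one]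
  have hleft := rogersSeries_halfShift_left t hq Y
  have hright := rogersSeries_halfShift_right t hq hY
  simp only [map_add, map_mul, map_pow] at *
  linear_combination C Y⁻¹ * ((1 - C Y * X) * hright + (C Y - C t * X) * hleft) +
    ((1 - C t * C Y * X + C t ^ 2 * X ^ 2) * rescale q (rogersSeries q t Y) -
      (1 - C Y * X + X ^ 2) * rogersSeries q t Y) * hC

end HalfShift

/-- The three-term recurrence characterising `n ↦ R_n(Y)` up to a scalar, where `x = Y + Y⁻¹`. -/
structure IsRogersSeq (q t x : K) (a : ℕ → K) : Prop where
  one : (1 - q) * a 1 = x * (1 - t) * a 0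
  add_two : ∀ n, (1 - q ^ (n + 2)) * a (n + 2) + (1 - t ^ 2 * q ^ n) * a n =
    x * (1 - t * q ^ (n + 1)) * a (n + 1)

lemma IsRogersSeq.const_mul {x : K} {a : ℕ → K} (ha : IsRogersSeq q t x a) (c : K) :
    IsRogersSeq q t x fun n => c * a n where
  one := by linear_combination c * ha.one
  add_two n := by linear_combination c * ha.add_two n

lemma IsRogersSeq.eq_of_zero {x : K} {a b : ℕ → K} (hq : ∀ i : ℕ, 1 - q ^ (i + 1) ≠ 0)
    (ha : IsRogersSeq q t x a) (hb : IsRogersSeq q t x b) (h0 : a 0 = b 0) (n : ℕ) :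
    a n = b n := by
  induction n using Nat.twoStepInduction with
  | zero => exact h0
  | one =>
    refine mul_left_cancel₀ (by simpa using hq 0) ?_
    linear_combination ha.one - hb.one + x * (1 - t) * h0
  | more n ih₀ ih₁ =>
    refine mul_left_cancel₀ (hq (n + 1)) ?_
    linear_combination ha.add_two n - hb.add_two n - (1 - t ^ 2 * q ^ n) * ih₀ +
      x * (1 - t * q ^ (n + 1)) * ih₁

lemma isRogersSeq_rogers (hq : ∀ i : ℕ, 1 - q ^ (i + 1) ≠ 0) (t : K) {Y : K} (hY : Y ≠ 0) :
    IsRogersSeq q t (Y + Y⁻¹) fun n => rogers q t n Y where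
  one := by
    have h := congrArg (coeff (0 + 1)) (rogersSeries_qShift t hq hY)
    simp only [LinearMap.map_add, LinearMap.map_sub, coeff_C_mul, coeff_succ_X_mul,
      coeff_zero_X_mul, coeff_rescale, rogersSeries, coeff_mk] at h
    linear_combination h
  add_two n := by
    have h := congrArg (coeff (n + 2)) (rogersSeries_qShift t hq hY)
    simp only [LinearMap.map_add, LinearMap.map_sub, coeff_C_mul, coeff_succ_X_mul, coeff_rescale,
      rogersSeries, coeff_mk] at h
    linear_combination h

section Difference

variable (t) {p Y : K} (hq : ∀ i : ℕ, 1 - q ^ (i + 1) ≠ 0) (hpq : p ^ 2 = q) (hp : p ≠ 0)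
  (hY : Y ≠ 0) (n : ℕ)
include hq hpq hp hY

lemma rogers_div_halfShift :
    p ^ n * ((t - Y ^ 2) * rogers q t n (Y / p)) =
      (1 - q ^ n * t * Y ^ 2) * rogers q t n Y - (1 - q ^ (n + 1)) * Y * rogers q t (n + 1) Y := by
  have hG : coeff n (rescale Y (qBinomialSeries q t) * rescale (q * Y⁻¹) (qBinomialSeries q t)) =
      p ^ n * rogers q t n (Y / p) := by
    have hresc := rescale_rogersSeries p q t (Y / p)
    rw [mul_div_cancel₀ _ hp, inv_div, mul_div_assoc', ← pow_two, hpq, div_eq_mul_inv q] at hresc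
    rw [← hresc, coeff_rescale, rogersSeries, coeff_mk]
  have h := congrArg (coeff (n + 1)) (rogersSeries_halfShift t hq hY)
  simp only [LinearMap.map_add, LinearMap.map_sub, coeff_C_mul, coeff_succ_X_mul, coeff_rescale,
    rogersSeries, coeff_mk, hG] at h
  linear_combination h

lemma rogers_mul_halfShift :
    p ^ n * ((1 - t * Y ^ 2) * rogers q t n (p * Y)) =
      (q ^ n * t - Y ^ 2) * rogers q t n Y + (1 - q ^ (n + 1)) * Y * rogers q t (n + 1) Y := by
  have h := rogers_div_halfShift t hq hpq hp (inv_ne_zero hY) n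
  rw [← rogers_inv _ _ _ (Y⁻¹ / p), inv_div, div_inv_eq_mul, rogers_inv, rogers_inv] at h
  field_simp at h
  rw [mul_comm Y p] at h
  linear_combination -h

lemma rogers_difference_eq :
    p ^ n * ((1 - t * Y ^ 2) * rogers q t n (p * Y) + (t - Y ^ 2) * rogers q t n (Y / p)) =
      (1 - Y ^ 2) * (1 + q ^ n * t) * rogers q t n Y := by
  linear_combination rogers_div_halfShift t hq hpq hp hY n + rogers_mul_halfShift t hq hpq hp hY n

lemma rogers_twisted_difference_eq :
    p ^ n * (Y ^ 2 * (1 - t * Y ^ 2) * rogers q t n (p * Y) +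
        (t - Y ^ 2) * rogers q t n (Y / p)) =
      (1 - Y ^ 2) * ((1 + Y ^ 2) * rogers q t n Y -
        (1 - q ^ (n + 1)) * Y * rogers q t (n + 1) Y) := by
  linear_combination rogers_div_halfShift t hq hpq hp hY n +
    Y ^ 2 * rogers_mul_halfShift t hq hpq hp hY n

end Difference

section Duality

variable {s : K} (hq : ∀ i : ℕ, 1 - q ^ (i + 1) ≠ 0) (hs : s ≠ 0)
include hq hs

lemma rogers_self_succ (n : ℕ) :
    (1 - q ^ (n + 1)) * s * rogers q (s ^ 2) (n + 1) s =
      (1 - (s ^ 2) ^ 2 * q ^ n) * rogers q (s ^ 2) n s := by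
  have h := congrArg (coeff (n + 1)) (rogersSeries_halfShift (s ^ 2) hq hs)
  simp only [LinearMap.map_add, LinearMap.map_sub, coeff_C_mul, coeff_succ_X_mul, coeff_rescale,
    rogersSeries, coeff_mk, sub_self] at h
  linear_combination h

lemma rogers_self (n : ℕ) :
    rogers q (s ^ 2) n s = s⁻¹ ^ n * qPochRatio q ((s ^ 2) ^ 2) n := by
  induction n with
  | zero => simp
  | succ n ih =>
    refine mul_left_cancel₀ (mul_ne_zero (hq n) hs) ?_
    rw [rogers_self_succ hq hs, ih]
    linear_combination (-(1 - q ^ (n + 1)) * s⁻¹ ^ n * qPochRatio q ((s ^ 2) ^ 2) (n + 1)) *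
      mul_inv_cancel₀ hs - s⁻¹ ^ n * qPochRatio_succ ((s ^ 2) ^ 2) (hq n)

lemma rogers_self_ne_zero (hgen : ∀ i : ℕ, 1 - (s ^ 2) ^ 2 * q ^ i ≠ 0) (n : ℕ) :
    rogers q (s ^ 2) n s ≠ 0 := by
  rw [rogers_self hq hs]
  exact mul_ne_zero (pow_ne_zero _ (inv_ne_zero hs)) (qPochRatio_ne_zero hq hgen n)

lemma isRogersSeq_rogers_node_mul_rogers_self {p : K} (hpq : p ^ 2 = q) (hp : p ≠ 0) (m : ℕ) :
    IsRogersSeq q (s ^ 2) (p ^ m * s + (p ^ m * s)⁻¹)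
      fun n => rogers q (s ^ 2) m (p ^ n * s) * rogers q (s ^ 2) n s where
  one := by
    have hdiff := rogers_difference_eq (s ^ 2) hq hpq hp hs m
    have hself := rogers_self_succ hq hs 0
    have hY := mul_ne_zero (pow_ne_zero m hp) hs
    simp only [pow_zero, pow_one, one_mul, zero_add, rogers_zero, mul_one, sub_self]
      at hself hdiff ⊢
    subst hpq
    refine mul_left_cancel₀ hY ?_
    linear_combination p ^ m * rogers (p ^ 2) (s ^ 2) m (p * s) * hself + hdiff -
      (1 - s ^ 2) * rogers (p ^ 2) (s ^ 2) m s * mul_inv_cancel₀ hY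
  add_two n := by
    have hdiff := rogers_difference_eq (s ^ 2) hq hpq hp (mul_ne_zero (pow_ne_zero (n + 1) hp) hs) m
    have hY := mul_ne_zero (pow_ne_zero m hp) hs
    have hself₀ := rogers_self_succ hq hs n
    have hself₁ := rogers_self_succ hq hs (n + 1)
    have hup : p * (p ^ (n + 1) * s) = p ^ (n + 1 + 1) * s := by ring
    have hdown : p ^ (n + 1) * s / p = p ^ n * s := by rw [pow_succ]; field_simp
    rw [hup, hdown] at hdiff
    subst hpq
    refine mul_left_cancel₀ hY ?_
    linear_combination p ^ m * rogers (p ^ 2) (s ^ 2) m (p ^ (n + 1 + 1) * s) * hself₁ -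
      p ^ m * s * rogers (p ^ 2) (s ^ 2) m (p ^ n * s) * hself₀ +
      rogers (p ^ 2) (s ^ 2) (n + 1) s * hdiff -
      (1 - s ^ 2 * (p ^ 2) ^ (n + 1)) * rogers (p ^ 2) (s ^ 2) m (p ^ (n + 1) * s) *
        rogers (p ^ 2) (s ^ 2) (n + 1) s * mul_inv_cancel₀ hY

lemma rogers_duality {p : K} (hpq : p ^ 2 = q) (hp : p ≠ 0) (n m : ℕ) :
    rogers q (s ^ 2) n (p ^ m * s) * rogers q (s ^ 2) m s =
      rogers q (s ^ 2) m (p ^ n * s) * rogers q (s ^ 2) n s := by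
  rw [mul_comm]
  have hnode : p ^ m * s ≠ 0 := mul_ne_zero (pow_ne_zero m hp) hs
  refine ((isRogersSeq_rogers hq (s ^ 2) hnode).const_mul _).eq_of_zero hq
    (isRogersSeq_rogers_node_mul_rogers_self hq hs hpq hp m) ?_ n
  simp

end Duality

lemma qPochRatio_mul_prod (hq : ∀ i : ℕ, 1 - q ^ (i + 1) ≠ 0) (ht : ∀ i : ℕ, 1 - t * q ^ i ≠ 0)
    {n j : ℕ} (hj : j ≤ n) :
    qPochRatio q t n * ∏ i ∈ range j, ((1 - q ^ (n - i)) * (1 - t * q ^ i)) /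
        ((1 - q ^ (1 + i)) * (1 - t * q ^ (n - i - 1))) =
      qPochRatio q t j * qPochRatio q t (n - j) := by
  induction j with
  | zero => simp
  | succ j ih =>
    obtain ⟨k, rfl⟩ := Nat.exists_eq_add_of_le hj
    have hsub : j + 1 + k - j = k + 1 := by omega
    rw [prod_range_succ, ← mul_assoc, ih (by omega), hsub, Nat.add_sub_cancel_left,
      Nat.add_sub_cancel, add_comm 1 j, mul_div_assoc', div_eq_iff (mul_ne_zero (hq j) (ht k))]
    linear_combination (1 - t * q ^ j) * qPochRatio q t j * qPochRatio_succ t (hq k) -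
      qPochRatio q t k * (1 - t * q ^ k) * qPochRatio_succ t (hq j)

end Algebra

section Normalization

lemma sum_range_succ_eq_sum_range_half {M : Type*} [AddCommMonoid M] (f : ℕ → M) (n : ℕ) :
    ∑ i ∈ range (n + 1), f i =
      ∑ j ∈ range (n / 2 + 1), if n - 2 * j = 0 then f j else f j + f (n - j) := by
  induction n using Nat.twoStepInduction generalizing f with
  | zero => simp
  | one => simp [sum_range_succ]
  | more n ih _ =>
    rw [sum_range_succ, sum_range_succ', ih, show (n + 2) / 2 = n / 2 + 1 by omega,
      sum_range_succ' _ (n / 2 + 1), add_assoc]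
    refine congrArg₂ (· + ·) (sum_congr rfl fun j hj => ?_) rfl
    have hj := mem_range.1 hj
    rw [show n + 2 - 2 * (j + 1) = n - 2 * j by omega, show n + 2 - (j + 1) = n - j + 1 by omega]

variable {q : ℝ} {t X : ℂ}

lemma rogersA1_eq_sum_range (q : ℝ) (t : ℂ) (n : ℕ) (X : ℂ) :
    RogersA1 q t n X = ∑ j ∈ range (n / 2 + 1), (∏ i ∈ range j,
      ((1 - (q : ℂ) ^ (n - i)) * (1 - t * (q : ℂ) ^ i)) /
      ((1 - (q : ℂ) ^ (1 + i)) * (1 - t * (q : ℂ) ^ (n - i - 1)))) * Msym (n - 2 * j) X := by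
  rw [RogersA1, sum_range_succ', add_comm, ← Ico_add_one_right_eq_Icc, sum_Ico_eq_sum_range]
  simp [add_comm 1]

lemma qPochRatio_mul_rogersA1 (hq : ∀ i : ℕ, 1 - (q : ℂ) ^ (i + 1) ≠ 0)
    (ht : ∀ i : ℕ, 1 - t * (q : ℂ) ^ i ≠ 0) (hX : X ≠ 0) (n : ℕ) :
    qPochRatio (q : ℂ) t n * RogersA1 q t n X = rogers (q : ℂ) t n X := by
  rw [rogersA1_eq_sum_range, mul_sum, rogers, Nat.sum_antidiagonal_eq_sum_range_succ_mk,
    sum_range_succ_eq_sum_range_half _ n]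
  refine sum_congr rfl fun j hj => ?_
  have hj : 2 * j ≤ n := by have := mem_range.1 hj; omega
  have hpow (Y : ℂ) (hY : Y ≠ 0) : Y ^ (n - 2 * j) = Y ^ (n - j) * Y⁻¹ ^ j := by
    rw [inv_pow, ← pow_sub₀ Y hY (by omega), show n - j - j = n - 2 * j by omega]
  rw [← mul_assoc, qPochRatio_mul_prod hq ht (by omega), Msym, Nat.sub_sub_self (by omega)]
  split_ifs with h0
  · rw [show n - j = j by omega, ← mul_pow, mul_inv_cancel₀ hX, one_pow]
  · rw [hpow X hX, hpow X⁻¹ (inv_ne_zero hX), inv_inv]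
    ring

lemma rogersA1_div_rogersA1 {Y : ℂ} (hq : ∀ i : ℕ, 1 - (q : ℂ) ^ (i + 1) ≠ 0)
    (ht : ∀ i : ℕ, 1 - t * (q : ℂ) ^ i ≠ 0) (hX : X ≠ 0) (hY : Y ≠ 0) (n : ℕ) :
    RogersA1 q t n X / RogersA1 q t n Y = rogers (q : ℂ) t n X / rogers (q : ℂ) t n Y := by
  rw [← qPochRatio_mul_rogersA1 hq ht hX, ← qPochRatio_mul_rogersA1 hq ht hY,
    mul_div_mul_left _ _ (qPochRatio_ne_zero hq ht n)]

end Normalization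

open Asymptotics Topology

section Limit

lemma one_sub_pow_succ_ne_zero {q : ℂ} (hq : ‖q‖ < 1) (i : ℕ) : 1 - q ^ (i + 1) ≠ 0 := by
  refine sub_ne_zero.2 fun h => ?_
  have hlt : ‖q ^ (i + 1)‖ < 1 := by
    rw [norm_pow]
    exact pow_lt_one₀ (norm_nonneg _) hq i.succ_ne_zero
  rw [← h, norm_one] at hlt
  exact hlt.false

/-- The limit `(t; q)_∞ / (q; q)_∞` of `qPochRatio q t n`. -/
def qPochRatioLimit (q t : ℂ) : ℂ :=
  (1 - t) * ∏' j : ℕ, (1 - t * q ^ (j + 1)) / (1 - q ^ (j + 1))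

variable {q : ℂ} (hq : ‖q‖ < 1)
include hq

lemma multipliable_one_sub_mul_pow_div (t : ℂ) :
    Multipliable fun j : ℕ => (1 - t * q ^ (j + 1)) / (1 - q ^ (j + 1)) := by
  have hsum : Summable fun j : ℕ => (1 - t) * (q ^ (j + 1) / (1 - q ^ (j + 1))) := by
    have hlambert : Summable fun n : ℕ => q ^ n / (1 - q ^ n) := by
      simpa only [pow_zero, one_mul] using summable_norm_pow_mul_geometric_div_one_sub 0 hq
    exact ((summable_nat_add_iff 1).2 hlambert).mul_left _
  convert multipliable_one_add_of_summable hsum.norm using 2 with j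
  have := one_sub_pow_succ_ne_zero hq j
  field_simp
  ring

lemma tendsto_one_sub_mul_pow (t : ℂ) : Tendsto (fun n : ℕ => 1 - t * q ^ n) atTop (𝓝 1) := by
  simpa using ((tendsto_pow_atTop_nhds_zero_of_norm_lt_one hq).const_mul t).const_sub 1

lemma tendsto_qPochRatio (t : ℂ) :
    Tendsto (qPochRatio q t) atTop (𝓝 (qPochRatioLimit q t)) := by
  have hnum := ((multipliable_one_sub_mul_pow_div hq t).hasProd.tendsto_prod_nat).const_mul (1 - t)
  have hden := tendsto_one_sub_mul_pow hq t
  have hquot := hnum.div hden one_ne_zero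
  rw [div_one] at hquot
  refine hquot.congr' ?_
  filter_upwards [hden.eventually_ne one_ne_zero] with n hn
  rw [Pi.div_apply, ← one_sub_mul_pow_mul_qPochRatio, mul_div_cancel_left₀ _ hn]

lemma exists_norm_qPochRatio_le (t : ℂ) : ∃ K, ∀ n, ‖qPochRatio q t n‖ ≤ K := by
  obtain ⟨K, hK⟩ := (tendsto_qPochRatio hq t).norm.bddAbove_range
  exact ⟨K, fun n => hK ⟨n, rfl⟩⟩

lemma norm_one_sub_mul_pow_le (t : ℂ) (n : ℕ) : ‖1 - t * q ^ n‖ ≤ 1 + ‖t‖ := by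
  refine (norm_sub_le _ _).trans ?_
  rw [norm_one, norm_mul, norm_pow]
  gcongr
  exact mul_le_of_le_one_right (norm_nonneg _) (pow_le_one₀ (norm_nonneg _) hq.le)

lemma exists_norm_rogers_le (t : ℂ) :
    ∃ K, 0 ≤ K ∧ ∀ (n : ℕ) (Y : ℂ), ‖rogers q t n Y‖ ≤ K * (‖Y‖ + ‖Y⁻¹‖) ^ n := by
  obtain ⟨K, hK⟩ := exists_norm_qPochRatio_le hq t
  have hK0 : 0 ≤ K := (norm_nonneg _).trans (hK 0)
  refine ⟨K * K, by positivity, fun n Y => ?_⟩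
  rw [(Commute.all _ _).add_pow', mul_sum]
  refine norm_sum_le_of_le _ fun x hx => ?_
  have hchoose : 1 ≤ n.choose x.1 := Nat.choose_pos (HasAntidiagonal.antidiagonal.fst_le hx)
  calc ‖qPochRatio q t x.1 * qPochRatio q t x.2 * (Y ^ x.1 * Y⁻¹ ^ x.2)‖
      = ‖qPochRatio q t x.1‖ * ‖qPochRatio q t x.2‖ * (1 • (‖Y‖ ^ x.1 * ‖Y⁻¹‖ ^ x.2)) := by
        simp only [norm_mul, norm_pow, one_smul]
    _ ≤ K * K * (n.choose x.1 • (‖Y‖ ^ x.1 * ‖Y⁻¹‖ ^ x.2)) := by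
        gcongr <;> exact hK _

end Limit

section ExpBounded

/-- Sequences of at most exponential growth; these are summable against a Gaussian `u ^ m ^ 2`. -/
def ExpBounded (f : ℕ → ℂ) : Prop := ∃ B : ℝ, f =O[atTop] fun m => B ^ m

lemma ExpBounded.mul {f g : ℕ → ℂ} (hf : ExpBounded f) (hg : ExpBounded g) :
    ExpBounded fun m => f m * g m := by
  obtain ⟨B, hB⟩ := hf
  obtain ⟨C, hC⟩ := hg
  exact ⟨B * C, by simpa only [mul_pow] using hB.mul hC⟩

lemma ExpBounded.shift {f : ℕ → ℂ} (hf : ExpBounded f) : ExpBounded fun m => f (m + 1) := by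
  obtain ⟨B, hB⟩ := hf
  refine ⟨B, (hB.comp_tendsto (tendsto_add_atTop_nat 1)).trans ?_⟩
  simpa only [Function.comp_def, pow_succ'] using
    (isBigO_refl (fun m : ℕ => B ^ m) atTop).const_mul_left B

lemma expBounded_of_tendsto {f : ℕ → ℂ} {a : ℂ} (hf : Tendsto f atTop (𝓝 a)) : ExpBounded f :=
  ⟨1, by simpa only [one_pow] using hf.isBigO_one ℝ⟩

lemma expBounded_const (c : ℂ) : ExpBounded fun _ => c :=
  expBounded_of_tendsto tendsto_const_nhds

lemma expBounded_pow (c : ℂ) : ExpBounded fun m => c ^ m :=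
  ⟨‖c‖, isBigO_of_le _ fun m => by simp⟩

lemma ExpBounded.summable {u : ℂ} (hu : ‖u‖ < 1) {f : ℕ → ℂ} (hf : ExpBounded f) :
    Summable fun m => u ^ m ^ 2 * f m := by
  obtain ⟨B, hB⟩ := hf
  have hgauss : Summable fun m : ℕ => u ^ m ^ 2 * (B : ℂ) ^ m := by
    refine summable_of_ratio_norm_eventually_le (r := 1 / 2) (by norm_num) ?_
    have hratio : Tendsto (fun m : ℕ => ‖u ^ (2 * m + 1) * B‖) atTop (𝓝 0) := by
      have hodd : Tendsto (fun m : ℕ => 2 * m + 1) atTop atTop :=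
        tendsto_atTop_mono (fun m => show m ≤ 2 * m + 1 by omega) tendsto_id
      simpa using
        (((tendsto_pow_atTop_nhds_zero_of_norm_lt_one hu).comp hodd).mul_const (B : ℂ)).norm
    filter_upwards [hratio.eventually_le_const (by norm_num : (0 : ℝ) < 1 / 2)] with m hm
    rw [show u ^ (m + 1) ^ 2 * (B : ℂ) ^ (m + 1) =
      u ^ (2 * m + 1) * B * (u ^ m ^ 2 * (B : ℂ) ^ m) by ring, norm_mul]
    gcongr
  refine summable_of_isBigO_nat hgauss.norm ?_
  have hB' : f =O[atTop] fun m => (B : ℂ) ^ m :=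
    hB.trans (isBigO_of_le _ fun m => by simp)
  exact ((isBigO_refl _ _).mul hB').norm_right

variable {q : ℂ} (hq : ‖q‖ < 1)
include hq

lemma expBounded_rogers (t X : ℂ) : ExpBounded fun m => rogers q t m X := by
  obtain ⟨K, -, hK⟩ := exists_norm_rogers_le hq t
  refine ⟨‖X‖ + ‖X⁻¹‖, IsBigO.of_bound K (.of_forall fun m => ?_)⟩
  rw [Real.norm_of_nonneg (by positivity)]
  exact hK m X

lemma expBounded_rogers_node (t p s : ℂ) (n : ℕ) :
    ExpBounded fun m => rogers q t n (p ^ m * s) := by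
  obtain ⟨K, hK0, hK⟩ := exists_norm_rogers_le hq t
  have hnode (m : ℕ) : ‖p ^ m * s‖ + ‖(p ^ m * s)⁻¹‖ ≤ (‖p‖ + ‖p⁻¹‖) ^ m * (‖s‖ + ‖s⁻¹‖) := by
    rw [mul_inv, ← inv_pow, norm_mul, norm_mul, norm_pow, norm_pow, mul_add]
    gcongr
    · exact le_add_of_nonneg_right (norm_nonneg _)
    · exact le_add_of_nonneg_left (norm_nonneg _)
  refine ⟨(‖p‖ + ‖p⁻¹‖) ^ n, IsBigO.of_bound (K * (‖s‖ + ‖s⁻¹‖) ^ n) (.of_forall fun m => ?_)⟩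
  rw [Real.norm_of_nonneg (by positivity)]
  calc ‖rogers q t n (p ^ m * s)‖
      ≤ K * ((‖p‖ + ‖p⁻¹‖) ^ m * (‖s‖ + ‖s⁻¹‖)) ^ n := (hK n _).trans (by gcongr; exact hnode m)
    _ = K * (‖s‖ + ‖s⁻¹‖) ^ n * ((‖p‖ + ‖p⁻¹‖) ^ n) ^ m := by
        rw [mul_pow, pow_right_comm]
        ring

end ExpBounded

section ThetaCoefficient

/-- The `j`-th contribution to the coefficient of `X ^ k` or `X ^ (-k)` in
`∑ u ^ m ^ 2 * (1 - t * q ^ m) * R_m(X)`, where `q = u ^ 4`, after division by `u ^ k ^ 2`. It comes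
from `m = k + 2 * j`. -/
def thetaCoeffTerm (q t : ℂ) (k j : ℕ) : ℂ :=
  q ^ (j ^ 2 + k * j) * (1 - t * q ^ (k + 2 * j)) * qPochRatio q t j * qPochRatio q t (j + k)

variable {q t : ℂ} (hq : ‖q‖ < 1)
include hq

lemma norm_pow_mul_qPochRatio_mul_le {K : ℝ} (hK : ∀ n, ‖qPochRatio q t n‖ ≤ K) (r : ℂ)
    (i j k : ℕ) :
    ‖q ^ (j ^ 2 + k * j) * (1 - r * q ^ i) * qPochRatio q t j * qPochRatio q t (j + k)‖ ≤
      ‖q‖ ^ j * ((1 + ‖r‖) * K * K) := by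
  have hK0 : 0 ≤ K := (norm_nonneg _).trans (hK 0)
  have hpow : ‖q‖ ^ (j ^ 2 + k * j) ≤ ‖q‖ ^ j :=
    pow_le_pow_of_le_one (norm_nonneg _) hq.le
      ((Nat.le_self_pow two_ne_zero j).trans (Nat.le_add_right _ _))
  simp only [norm_mul, norm_pow, mul_assoc]
  gcongr
  exacts [norm_one_sub_mul_pow_le hq r i, hK j, hK (j + k)]

lemma summable_pow_mul_qPochRatio_mul (t r : ℂ) (i : ℕ → ℕ) (k : ℕ) :
    Summable fun j =>
      q ^ (j ^ 2 + k * j) * (1 - r * q ^ i j) * qPochRatio q t j * qPochRatio q t (j + k) := by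
  obtain ⟨K, hK⟩ := exists_norm_qPochRatio_le hq t
  exact .of_norm_bounded ((summable_geometric_of_lt_one (norm_nonneg _) hq).mul_right _)
    fun j => norm_pow_mul_qPochRatio_mul_le hq hK r (i j) j k

lemma tsum_thetaCoeffTerm_succ (t : ℂ) (k : ℕ) :
    ∑' j, thetaCoeffTerm q t (k + 1) j = ∑' j, thetaCoeffTerm q t k j := by
  let a (j : ℕ) : ℂ :=
    q ^ (j ^ 2 + k * j) * (1 - 1 * q ^ j) * qPochRatio q t j * qPochRatio q t (j + k)
  have ha : Summable a := summable_pow_mul_qPochRatio_mul hq t 1 id k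
  have htele (j : ℕ) :
      thetaCoeffTerm q t (k + 1) j + a j = thetaCoeffTerm q t k j + a (j + 1) := by
    have hc := qPochRatio_succ t (one_sub_pow_succ_ne_zero hq j)
    have hck := qPochRatio_succ t (one_sub_pow_succ_ne_zero hq (j + k))
    simp only [thetaCoeffTerm, a]
    rw [show j + 1 + k = j + k + 1 by ring, ← add_assoc]
    linear_combination q ^ (j ^ 2 + k * j + j) * qPochRatio q t j * hck -
      q ^ ((j + 1) ^ 2 + k * (j + 1)) * qPochRatio q t (j + k + 1) * hc
  have hshift : ∑' j, a (j + 1) = ∑' j, a j := by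
    rw [ha.tsum_eq_zero_add]
    simp [a]
  have hsum : ∑' j, (thetaCoeffTerm q t (k + 1) j + a j) =
      ∑' j, (thetaCoeffTerm q t k j + a (j + 1)) := tsum_congr htele
  have hterm (k : ℕ) : Summable (thetaCoeffTerm q t k) :=
    summable_pow_mul_qPochRatio_mul hq t t (fun j => k + 2 * j) k
  rw [(hterm (k + 1)).tsum_add ha, (hterm k).tsum_add ((summable_nat_add_iff 1).2 ha),
    hshift] at hsum
  exact add_right_cancel hsum

lemma tendsto_thetaCoeffTerm (t : ℂ) (j : ℕ) :
    Tendsto (fun k => thetaCoeffTerm q t k j) atTop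
      (𝓝 (if j = 0 then qPochRatioLimit q t else 0)) := by
  have hpow : Tendsto (fun k => q ^ (j ^ 2 + k * j)) atTop (𝓝 (if j = 0 then 1 else 0)) := by
    split_ifs with hj
    · simp [hj]
    · exact (tendsto_pow_atTop_nhds_zero_of_norm_lt_one hq).comp (tendsto_atTop_mono
        (fun k => (Nat.le_mul_of_pos_right k (Nat.pos_of_ne_zero hj)).trans (Nat.le_add_left _ _))
        tendsto_id)
  have hone : Tendsto (fun k => 1 - t * q ^ (k + 2 * j)) atTop (𝓝 1) :=
    (tendsto_one_sub_mul_pow hq t).comp (tendsto_add_atTop_nat (2 * j))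
  have hc : Tendsto (fun k => qPochRatio q t (j + k)) atTop (𝓝 (qPochRatioLimit q t)) := by
    simpa only [add_comm j, Function.comp_def] using
      (tendsto_qPochRatio hq t).comp (tendsto_add_atTop_nat j)
  have hterm := ((hpow.mul hone).mul_const (qPochRatio q t j)).mul hc
  have hvalue : (if j = 0 then 1 else 0) * 1 * qPochRatio q t j * qPochRatioLimit q t =
      if j = 0 then qPochRatioLimit q t else 0 := by
    split_ifs with hj <;> simp [hj]
  rwa [hvalue] at hterm

lemma tsum_thetaCoeffTerm (t : ℂ) (k : ℕ) :
    ∑' j, thetaCoeffTerm q t k j = qPochRatioLimit q t := by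
  obtain ⟨K, hK⟩ := exists_norm_qPochRatio_le hq t
  have hlim : Tendsto (fun k => ∑' j, thetaCoeffTerm q t k j) atTop (𝓝 (qPochRatioLimit q t)) := by
    rw [← tsum_ite_eq 0 fun _ => qPochRatioLimit q t]
    exact tendsto_tsum_of_dominated_convergence
      ((summable_geometric_of_lt_one (norm_nonneg q) hq).mul_right ((1 + ‖t‖) * K * K))
      (tendsto_thetaCoeffTerm hq t)
      (.of_forall fun k j => norm_pow_mul_qPochRatio_mul_le hq hK t _ j k)
  have hconst (k : ℕ) : ∑' j, thetaCoeffTerm q t k j = ∑' j, thetaCoeffTerm q t 0 j := by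
    induction k with
    | zero => rfl
    | succ k ih => rw [tsum_thetaCoeffTerm_succ hq, ih]
  rw [hconst k]
  exact tendsto_nhds_unique (tendsto_const_nhds.congr fun k => (hconst k).symm) hlim

end ThetaCoefficient

section Theta

/-- The theta function with nome `u`; `thetaA1 q` is the case `u ^ 4 = q`. -/
def theta (u X : ℂ) : ℂ := ∑' k : ℤ, u ^ (k ^ 2) * X ^ k

lemma theta_inv (u X : ℂ) : theta u X⁻¹ = theta u X := by
  rw [theta, ← (Equiv.neg ℤ).tsum_eq]
  simp only [Equiv.neg_apply, neg_sq, inv_zpow', neg_neg, theta]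

lemma theta_eq_mul_theta {u X : ℂ} (hu : u ≠ 0) (hX : X ≠ 0) (n : ℕ) :
    theta u X = u ^ n ^ 2 * X ^ n * theta u ((u ^ 2) ^ n * X) := by
  rw [theta, ← (Equiv.addLeft (n : ℤ)).tsum_eq, theta, ← tsum_mul_left]
  refine tsum_congr fun k => ?_
  rw [Equiv.coe_addLeft, show ((n : ℤ) + k) ^ 2 = ((n ^ 2 : ℕ) : ℤ) + 2 * (n : ℤ) * k + k ^ 2 by
    push_cast; ring, zpow_add₀ hu, zpow_add₀ hu, zpow_add₀ hX, mul_zpow, zpow_natCast, zpow_natCast,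
    zpow_mul, ← pow_mul, ← zpow_natCast u (2 * n)]
  push_cast
  ring

/-- The reindexing `(i, j) ↦ (i - j, min i j)` of pairs of naturals, inverted. -/
def intProdNatEquiv : ℤ × ℕ ≃ ℕ × ℕ where
  toFun x := (x.2 + x.1.toNat, x.2 + (-x.1).toNat)
  invFun y := ((y.1 : ℤ) - y.2, min y.1 y.2)
  left_inv x := by
    ext <;> simp only [Nat.cast_add, Nat.add_min_add_left] <;> omega
  right_inv y := by
    ext <;> simp only [neg_sub] <;> omega

/-- The monomial `X ^ (i - j)` of `u ^ m ^ 2 * (1 - t * q ^ m) * R_m(X)`, where `m = i + j` and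
`q = u ^ 4`. -/
def thetaMonomial (u t X : ℂ) (x : ℕ × ℕ) : ℂ :=
  u ^ (x.1 + x.2) ^ 2 * ((1 - t * (u ^ 4) ^ (x.1 + x.2)) *
    (qPochRatio (u ^ 4) t x.1 * qPochRatio (u ^ 4) t x.2 * (X ^ x.1 * X⁻¹ ^ x.2)))

lemma thetaMonomial_swap (u t X : ℂ) (x : ℕ × ℕ) :
    thetaMonomial u t X⁻¹ x.swap = thetaMonomial u t X x := by
  simp only [thetaMonomial, Prod.fst_swap, Prod.snd_swap, inv_inv, add_comm x.2]
  ring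

lemma thetaMonomial_add (u t : ℂ) {X : ℂ} (hX : X ≠ 0) (k j : ℕ) :
    thetaMonomial u t X (j + k, j) = u ^ k ^ 2 * X ^ k * thetaCoeffTerm (u ^ 4) t k j := by
  have hXj : X ^ j * X⁻¹ ^ j = 1 := by rw [← mul_pow, mul_inv_cancel₀ hX, one_pow]
  rw [thetaMonomial, thetaCoeffTerm, show j + k + j = k + 2 * j by ring,
    show (k + 2 * j) ^ 2 = k ^ 2 + 4 * (j ^ 2 + k * j) by ring, pow_add u, pow_mul u, pow_add X]
  linear_combination u ^ k ^ 2 * (u ^ 4) ^ (j ^ 2 + k * j) * (1 - t * (u ^ 4) ^ (k + 2 * j)) *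
    qPochRatio (u ^ 4) t j * qPochRatio (u ^ 4) t (j + k) * X ^ k * hXj

lemma thetaMonomial_intProdNatEquiv (u t : ℂ) {X : ℂ} (hX : X ≠ 0) (k : ℤ) (j : ℕ) :
    thetaMonomial u t X (intProdNatEquiv (k, j)) =
      u ^ (k ^ 2) * X ^ k * thetaCoeffTerm (u ^ 4) t k.natAbs j := by
  have hsq (m : ℕ) : u ^ ((m : ℤ) ^ 2) = u ^ m ^ 2 := by exact_mod_cast zpow_natCast u (m ^ 2)
  obtain ⟨m, rfl | rfl⟩ := Int.eq_nat_or_neg k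
  · rw [hsq, zpow_natCast, Int.natAbs_natCast, ← thetaMonomial_add u t hX]
    simp [intProdNatEquiv]
  · rw [neg_sq, hsq, zpow_neg, ← inv_zpow, zpow_natCast, Int.natAbs_neg, Int.natAbs_natCast,
      ← thetaMonomial_add u t (inv_ne_zero hX), ← thetaMonomial_swap]
    simp [intProdNatEquiv]

variable {u : ℂ} (hu : ‖u‖ < 1)
include hu

lemma norm_pow_four_lt_one : ‖u ^ 4‖ < 1 := by
  rw [norm_pow]
  exact pow_lt_one₀ (norm_nonneg _) hu four_ne_zero

lemma summable_thetaMonomial (t X : ℂ) : Summable (thetaMonomial u t X) := by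
  have hq := norm_pow_four_lt_one hu
  have hfactor (Y : ℂ) : Summable fun i => ‖u ^ i ^ 2 * (qPochRatio (u ^ 4) t i * Y ^ i)‖ :=
    (((expBounded_of_tendsto (tendsto_qPochRatio hq t)).mul (expBounded_pow Y)).summable hu).norm
  refine .of_norm_bounded (((hfactor X).mul_norm (hfactor X⁻¹)).mul_right (1 + ‖t‖)) fun x => ?_
  have hcross : ‖u ^ (2 * x.1 * x.2) * (1 - t * (u ^ 4) ^ (x.1 + x.2))‖ ≤ 1 + ‖t‖ := by
    rw [norm_mul, norm_pow]
    exact (mul_le_of_le_one_left (norm_nonneg _) (pow_le_one₀ (norm_nonneg _) hu.le)).trans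
      (norm_one_sub_mul_pow_le hq t _)
  calc ‖thetaMonomial u t X x‖
      = ‖u ^ x.1 ^ 2 * (qPochRatio (u ^ 4) t x.1 * X ^ x.1) *
          (u ^ x.2 ^ 2 * (qPochRatio (u ^ 4) t x.2 * X⁻¹ ^ x.2))‖ *
        ‖u ^ (2 * x.1 * x.2) * (1 - t * (u ^ 4) ^ (x.1 + x.2))‖ := by
        rw [← norm_mul, thetaMonomial]
        ring_nf
    _ ≤ _ := by gcongr

lemma tsum_mul_rogers_eq_theta (t : ℂ) {X : ℂ} (hX : X ≠ 0) :
    ∑' m : ℕ, u ^ m ^ 2 * ((1 - t * (u ^ 4) ^ m) * rogers (u ^ 4) t m X) =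
      qPochRatioLimit (u ^ 4) t * theta u X := by
  have hsum := summable_thetaMonomial hu t X
  have hdiag := (HasAntidiagonal.sigmaAntidiagonalEquivProd.hasSum_iff.2 hsum.hasSum).sigma
    fun m => hasSum_fintype _
  calc ∑' m : ℕ, u ^ m ^ 2 * ((1 - t * (u ^ 4) ^ m) * rogers (u ^ 4) t m X)
      = ∑' x, thetaMonomial u t X x := by
        rw [← hdiag.tsum_eq]
        refine tsum_congr fun m => ?_
        rw [rogers, mul_sum, mul_sum, ← sum_coe_sort (antidiagonal m)]
        refine sum_congr rfl fun x _ => ?_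
        simp only [Function.comp, HasAntidiagonal.sigmaAntidiagonalEquivProd_apply, thetaMonomial]
        rw [mem_antidiagonal.1 x.2]
    _ = ∑' (k : ℤ) (j : ℕ), thetaMonomial u t X (intProdNatEquiv (k, j)) := by
        rw [← intProdNatEquiv.tsum_eq]
        exact (intProdNatEquiv.summable_iff.2 hsum).tsum_prod
    _ = qPochRatioLimit (u ^ 4) t * theta u X := by
        simp only [thetaMonomial_intProdNatEquiv u t hX, tsum_mul_left,
          tsum_thetaCoeffTerm (norm_pow_four_lt_one hu), tsum_mul_right, theta]
        rw [mul_comm]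

end Theta

section GaussianPairing

lemma hasSum_of_shift {g P Q : ℕ → ℂ} (hP : Summable P) (hQ : Summable Q) (h0 : g 0 = P 0)
    (h : ∀ m, g (m + 1) = P (m + 1) + Q m) : HasSum g (∑' m, P m + ∑' m, Q m) := by
  rw [← hasSum_nat_add_iff' 1, sum_range_one, h0, hP.tsum_eq_zero_add,
    show P 0 + ∑' m, P (m + 1) + ∑' m, Q m - P 0 = ∑' m, P (m + 1) + ∑' m, Q m by ring]
  simp only [h]
  exact ((summable_nat_add_iff 1).2 hP).hasSum.add hQ.hasSum

/-- The Gaussian-weighted pairing of a sequence `φ` with the Rogers polynomials at `X`, where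
`q = u ^ 4`. When `φ m` is a polynomial at the node `u ^ (2 * m) * s` and `t = s ^ 2`, this is the
spherical series. -/
def gaussianPairing (u t X : ℂ) (φ : ℕ → ℂ) : ℂ :=
  ∑' m : ℕ, u ^ m ^ 2 * ((1 - t * (u ^ 4) ^ m) * rogers (u ^ 4) t m X * φ m)

lemma gaussianPairing_const_mul (u t X c : ℂ) (φ : ℕ → ℂ) :
    gaussianPairing u t X (fun m => c * φ m) = c * gaussianPairing u t X φ := by
  rw [gaussianPairing, gaussianPairing, ← tsum_mul_left]
  exact tsum_congr fun m => by ring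

variable {u : ℂ} (hu1 : ‖u‖ < 1)
include hu1

lemma expBounded_one_sub_mul_pow (t : ℂ) : ExpBounded fun m => 1 - t * (u ^ 4) ^ m :=
  expBounded_of_tendsto (tendsto_one_sub_mul_pow (norm_pow_four_lt_one hu1) t)

lemma gaussianPairing_add (t X : ℂ) {φ ψ : ℕ → ℂ} (hφ : ExpBounded φ) (hψ : ExpBounded ψ) :
    gaussianPairing u t X (fun m => φ m + ψ m) =
      gaussianPairing u t X φ + gaussianPairing u t X ψ := by
  have hweight : ExpBounded fun m => (1 - t * (u ^ 4) ^ m) * rogers (u ^ 4) t m X :=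
    (expBounded_one_sub_mul_pow hu1 t).mul (expBounded_rogers (norm_pow_four_lt_one hu1) t X)
  simp only [gaussianPairing, mul_add]
  exact ((hweight.mul hφ).summable hu1).tsum_add ((hweight.mul hψ).summable hu1)

lemma add_inv_mul_gaussianPairing {t X : ℂ} (hX : X ≠ 0) {φ γ : ℕ → ℂ} (hφ : ExpBounded φ)
    (hzero : (1 - t) * γ 0 = u * (1 - t ^ 2) * φ 1)
    (hsucc : ∀ m, u ^ (m + 1) ^ 2 * (1 - t * (u ^ 4) ^ (m + 1)) * γ (m + 1) =
      u ^ m ^ 2 * (1 - (u ^ 4) ^ (m + 1)) * φ m +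
        u ^ (m + 2) ^ 2 * (1 - t ^ 2 * (u ^ 4) ^ (m + 1)) * φ (m + 2)) :
    (X + X⁻¹) * gaussianPairing u t X φ = gaussianPairing u t X γ := by
  have hq := norm_pow_four_lt_one hu1
  have hR := isRogersSeq_rogers (one_sub_pow_succ_ne_zero hq) t hX
  have hRb := expBounded_rogers hq t X
  -- Both sides of the claim are `∑ P + ∑ Q`, with `Q` shifted against `P` on the left, by the
  -- recurrence in `m`, and `P` shifted against `Q` on the right, by the relation of `φ` and `γ`.
  let P (m : ℕ) : ℂ := u ^ m ^ 2 * ((1 - 1 * (u ^ 4) ^ (m + 1)) * rogers (u ^ 4) t (m + 1) X * φ m)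
  let Q (m : ℕ) : ℂ := u ^ m ^ 2 *
    (u * (u ^ 2) ^ m * (1 - t ^ 2 * (u ^ 4) ^ m) * rogers (u ^ 4) t m X * φ (m + 1))
  have hP : Summable P :=
    (((expBounded_one_sub_mul_pow hu1 1).shift.mul hRb.shift).mul hφ).summable hu1
  have hQ : Summable Q :=
    (((((expBounded_const u).mul (expBounded_pow (u ^ 2))).mul
      (expBounded_one_sub_mul_pow hu1 (t ^ 2))).mul hRb).mul hφ.shift).summable hu1
  have hleft : HasSum (fun m => (X + X⁻¹) *
      (u ^ m ^ 2 * ((1 - t * (u ^ 4) ^ m) * rogers (u ^ 4) t m X * φ m)))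
      (∑' m, P m + ∑' m, Q m) := by
    refine hasSum_of_shift hP hQ ?_ fun m => ?_
    · simp only [P]
      linear_combination -φ 0 * hR.one
    · simp only [P, Q]
      linear_combination -u ^ (m + 1) ^ 2 * φ (m + 1) * hR.add_two m
  have hright : HasSum
      (fun m => u ^ m ^ 2 * ((1 - t * (u ^ 4) ^ m) * rogers (u ^ 4) t m X * γ m))
      (∑' m, Q m + ∑' m, P m) := by
    refine hasSum_of_shift hQ hP ?_ fun m => ?_
    · simp only [Q, rogers_zero]
      linear_combination hzero
    · simp only [P, Q]
      linear_combination rogers (u ^ 4) t (m + 1) X * hsucc m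
  rw [gaussianPairing, gaussianPairing, ← tsum_mul_left, hleft.tsum_eq, hright.tsum_eq, add_comm]

section Node

variable (hu : u ≠ 0) {s X : ℂ} (hs : s ≠ 0) (hX : X ≠ 0)
include hu hs hX

lemma add_inv_mul_gaussianPairing_node {φ γ : ℂ → ℂ}
    (hφ : ExpBounded fun m => φ ((u ^ 2) ^ m * s))
    (h : ∀ Y, Y ≠ 0 → s * Y * (1 - Y ^ 2) * γ Y =
      u * (Y ^ 2 * (1 - s ^ 2 * Y ^ 2) * φ (u ^ 2 * Y) + (s ^ 2 - Y ^ 2) * φ (Y / u ^ 2))) :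
    (X + X⁻¹) * gaussianPairing u (s ^ 2) X (fun m => φ ((u ^ 2) ^ m * s)) =
      gaussianPairing u (s ^ 2) X fun m => γ ((u ^ 2) ^ m * s) := by
  have hp : u ^ 2 ≠ 0 := pow_ne_zero 2 hu
  refine add_inv_mul_gaussianPairing hu1 hX hφ ?_ fun m => ?_
  · refine mul_left_cancel₀ (pow_ne_zero 2 hs) ?_
    simp only [pow_zero, one_mul, pow_one]
    linear_combination h s hs
  · have hup := h ((u ^ 2) ^ (m + 1) * s) (mul_ne_zero (pow_ne_zero _ hp) hs)
    rw [show u ^ 2 * ((u ^ 2) ^ (m + 1) * s) = (u ^ 2) ^ (m + 2) * s by ring,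
      show (u ^ 2) ^ (m + 1) * s / u ^ 2 = (u ^ 2) ^ m * s by
        rw [pow_succ']; field_simp] at hup
    refine mul_left_cancel₀ (mul_ne_zero (pow_ne_zero (2 * m + 2) hu) (pow_ne_zero 2 hs)) ?_
    linear_combination u ^ (m + 1) ^ 2 * hup

lemma isRogersSeq_gaussianPairing_node :
    IsRogersSeq (u ^ 4) (s ^ 2) (X + X⁻¹) fun n => u ^ n ^ 2 * s ^ n *
      gaussianPairing u (s ^ 2) X fun m => rogers (u ^ 4) (s ^ 2) n ((u ^ 2) ^ m * s) := by
  have hqn := norm_pow_four_lt_one hu1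
  have hq := one_sub_pow_succ_ne_zero hqn
  have hnode := expBounded_rogers_node hqn (s ^ 2) (u ^ 2) s
  constructor
  · have hmul := add_inv_mul_gaussianPairing_node hu1 hu hs hX (φ := fun _ => 1 - s ^ 2)
      (γ := fun Y => (1 - u ^ 4) * (u * s) * rogers (u ^ 4) (s ^ 2) 1 Y) (expBounded_const _)
      fun Y hY => by
        have hone := (isRogersSeq_rogers hq (s ^ 2) hY).one
        have hYinv : Y * Y⁻¹ = 1 := mul_inv_cancel₀ hY
        simp only [rogers_zero] at hone
        linear_combination u * s ^ 2 * Y * (1 - Y ^ 2) * hone +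
          u * s ^ 2 * (1 - s ^ 2) * (1 - Y ^ 2) * hYinv
    rw [← mul_one (1 - s ^ 2), gaussianPairing_const_mul, gaussianPairing_const_mul] at hmul
    simp only [rogers_zero]
    linear_combination -hmul
  · intro n
    have hmul := add_inv_mul_gaussianPairing_node hu1 hu hs hX
      (φ := fun Y => (1 - s ^ 2 * (u ^ 4) ^ (n + 1)) * (u ^ (n + 1) ^ 2 * s ^ (n + 1)) *
        rogers (u ^ 4) (s ^ 2) (n + 1) Y)
      (γ := fun Y => (1 - (u ^ 4) ^ (n + 2)) * (u ^ (n + 2) ^ 2 * s ^ (n + 2)) *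
          rogers (u ^ 4) (s ^ 2) (n + 2) Y +
        (1 - (s ^ 2) ^ 2 * (u ^ 4) ^ n) * (u ^ n ^ 2 * s ^ n) * rogers (u ^ 4) (s ^ 2) n Y)
      ((expBounded_const _).mul (hnode (n + 1))) fun Y hY => by
        have hrec := (isRogersSeq_rogers hq (s ^ 2) hY).add_two n
        have hdiff := rogers_twisted_difference_eq (s ^ 2) hq (p := u ^ 2) (by ring)
          (pow_ne_zero 2 hu) hY (n + 1)
        have hYinv : Y * Y⁻¹ = 1 := mul_inv_cancel₀ hY
        refine mul_left_cancel₀ (pow_ne_zero (2 * n + 1) hu) ?_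
        linear_combination u ^ (n + 1) ^ 2 * s ^ (n + 1) * ((1 - Y ^ 2) * Y * hrec -
          (1 - s ^ 2 * (u ^ 4) ^ (n + 1)) * hdiff + (1 - Y ^ 2) *
            (1 - s ^ 2 * (u ^ 4) ^ (n + 1)) * rogers (u ^ 4) (s ^ 2) (n + 1) Y * hYinv)
    rw [gaussianPairing_add hu1 _ _ ((expBounded_const _).mul (hnode (n + 2)))
      ((expBounded_const _).mul (hnode n))] at hmul
    simp only [gaussianPairing_const_mul] at hmul
    linear_combination -hmul

lemma gaussianPairing_node (n : ℕ) :
    u ^ n ^ 2 * s ^ n *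
        gaussianPairing u (s ^ 2) X (fun m => rogers (u ^ 4) (s ^ 2) n ((u ^ 2) ^ m * s)) =
      qPochRatioLimit (u ^ 4) (s ^ 2) * theta u X * rogers (u ^ 4) (s ^ 2) n X := by
  have hq := one_sub_pow_succ_ne_zero (norm_pow_four_lt_one hu1)
  refine (isRogersSeq_gaussianPairing_node hu1 hu hs hX).eq_of_zero hq
    ((isRogersSeq_rogers hq (s ^ 2) hX).const_mul _) ?_ n
  simp [gaussianPairing, tsum_mul_rogers_eq_theta hu1 (s ^ 2) hX]

end Node

end GaussianPairing

section Spherical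

lemma rpow_sq_div_four {u : ℝ} (hu0 : 0 < u) (k : ℤ) :
    (((u ^ 4) ^ ((k : ℝ) ^ 2 / 4) : ℝ) : ℂ) = (u : ℂ) ^ (k ^ 2) := by
  rw [← Real.rpow_natCast, ← Real.rpow_mul hu0.le,
    show ((4 : ℕ) : ℝ) * ((k : ℝ) ^ 2 / 4) = ((k ^ 2 : ℤ) : ℝ) by push_cast; ring,
    Real.rpow_intCast, Complex.ofReal_zpow]

lemma thetaA1_pow_four {u : ℝ} (hu0 : 0 < u) (X : ℂ) : thetaA1 (u ^ 4) X = theta u X :=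
  tsum_congr fun k => by rw [rpow_sq_div_four hu0]

lemma exists_pow_four_eq {q : ℝ} (hq0 : 0 < q) (hq1 : q < 1) :
    ∃ u : ℝ, 0 < u ∧ ‖(u : ℂ)‖ < 1 ∧ q = u ^ 4 := by
  refine ⟨q ^ (1 / 4 : ℝ), Real.rpow_pos_of_pos hq0 _, ?_, ?_⟩
  · rw [Complex.norm_of_nonneg (Real.rpow_nonneg hq0.le _)]
    exact Real.rpow_lt_one hq0.le hq1 (by norm_num)
  · rw [← Real.rpow_natCast, ← Real.rpow_mul hq0.le]
    norm_num

lemma rpow_neg_div_two_mul_inv {u : ℝ} (hu0 : 0 < u) (s : ℂ) (n : ℕ) :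
    (((u ^ 4) ^ (-(n : ℝ) / 2) : ℝ) : ℂ) * s⁻¹ = (((u : ℂ) ^ 2) ^ n * s)⁻¹ := by
  rw [mul_inv, ← Real.rpow_natCast, ← Real.rpow_mul hu0.le,
    show ((4 : ℕ) : ℝ) * (-(n : ℝ) / 2) = -((2 * n : ℕ) : ℝ) by push_cast; ring,
    Real.rpow_neg hu0.le, Real.rpow_natCast, ← pow_mul, Complex.ofReal_inv, Complex.ofReal_pow]

lemma theta_mul_inv_node {u s : ℂ} (hu : u ≠ 0) (hs : s ≠ 0) (n : ℕ) :
    u ^ n ^ 2 * s ^ n * theta u ((u ^ 2) ^ n * s)⁻¹ = theta u s := by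
  rw [theta_inv, ← theta_eq_mul_theta hu hs]

lemma one_sub_mul_pow_ne_zero_of_sq {q s : ℂ} (h : ∀ i : ℕ, 1 - (s ^ 2) ^ 2 * q ^ i ≠ 0) (i : ℕ) :
    1 - s ^ 2 * q ^ i ≠ 0 := fun hi =>
  h (2 * i) (by linear_combination (1 + s ^ 2 * q ^ i) * hi)

lemma sphericalTerm_inv_node {q s : ℝ} {p X : ℂ} (hq : ∀ i : ℕ, 1 - (q : ℂ) ^ (i + 1) ≠ 0)
    (hpq : p ^ 2 = q) (hp : p ≠ 0) (hs : (s : ℂ) ≠ 0)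
    (hgen : ∀ i : ℕ, 1 - ((s : ℂ) ^ 2) ^ 2 * (q : ℂ) ^ i ≠ 0) (hX : X ≠ 0) (n m : ℕ) :
    (1 - (s : ℂ) ^ 2) * rogers (q : ℂ) ((s : ℂ) ^ 2) n s *
        ((s : ℂ) ^ m * RogersA1 q ((s : ℂ) ^ 2) m X * RogersA1 q ((s : ℂ) ^ 2) m (p ^ n * s)⁻¹ *
          ∏ i ∈ range m, (1 - (s : ℂ) ^ 2 * (q : ℂ) ^ i) * (1 - (s : ℂ) ^ 2 * (q : ℂ) ^ (i + 1)) /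
            ((1 - ((s : ℂ) ^ 2) ^ 2 * (q : ℂ) ^ i) * (1 - (q : ℂ) ^ (i + 1)))) =
      (1 - (s : ℂ) ^ 2 * (q : ℂ) ^ m) * rogers (q : ℂ) ((s : ℂ) ^ 2) m X *
        rogers (q : ℂ) ((s : ℂ) ^ 2) n (p ^ m * s) := by
  have ht := one_sub_mul_pow_ne_zero_of_sq hgen
  have hPX := qPochRatio_mul_rogersA1 hq ht hX m
  have hPΛ := qPochRatio_mul_rogersA1 hq ht (inv_ne_zero (mul_ne_zero (pow_ne_zero n hp) hs)) m
  have hcoeff := prod_sphericalCoeff hq hgen m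
  have hdual := rogers_duality hq hs hpq hp n m
  have hss : (s : ℂ) ^ m * (s : ℂ)⁻¹ ^ m = 1 := by rw [← mul_pow, mul_inv_cancel₀ hs, one_pow]
  rw [rogers_self hq hs] at hdual
  rw [rogers_inv] at hPΛ
  refine mul_left_cancel₀ (qPochRatio_ne_zero hq hgen m) ?_
  linear_combination
    s ^ m * rogers (q : ℂ) ((s : ℂ) ^ 2) n s * RogersA1 q ((s : ℂ) ^ 2) m X *
      RogersA1 q ((s : ℂ) ^ 2) m (p ^ n * s)⁻¹ * hcoeff +
    s ^ m * (1 - (s : ℂ) ^ 2 * (q : ℂ) ^ m) * rogers (q : ℂ) ((s : ℂ) ^ 2) n s *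
      (qPochRatio (q : ℂ) ((s : ℂ) ^ 2) m * RogersA1 q ((s : ℂ) ^ 2) m (p ^ n * s)⁻¹ * hPX +
        rogers (q : ℂ) ((s : ℂ) ^ 2) m X * hPΛ) -
    s ^ m * (1 - (s : ℂ) ^ 2 * (q : ℂ) ^ m) * rogers (q : ℂ) ((s : ℂ) ^ 2) m X * hdual +
    (1 - (s : ℂ) ^ 2 * (q : ℂ) ^ m) * rogers (q : ℂ) ((s : ℂ) ^ 2) m X *
      rogers (q : ℂ) ((s : ℂ) ^ 2) n (p ^ m * s) *
      qPochRatio (q : ℂ) (((s : ℂ) ^ 2) ^ 2) m * hss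

lemma sphA1_inv_node {u s : ℝ} (hu0 : 0 < u) (hu1 : ‖(u : ℂ)‖ < 1) (hs : (s : ℂ) ≠ 0)
    (hgen : ∀ i : ℕ, 1 - ((s : ℂ) ^ 2) ^ 2 * ((u : ℂ) ^ 4) ^ i ≠ 0) {X : ℂ} (hX : X ≠ 0) (n : ℕ) :
    (1 - (s : ℂ) ^ 2) * rogers ((u : ℂ) ^ 4) ((s : ℂ) ^ 2) n s *
        sphA1 (u ^ 4) s X (((u : ℂ) ^ 2) ^ n * s)⁻¹ =
      gaussianPairing u ((s : ℂ) ^ 2) X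
        fun m => rogers ((u : ℂ) ^ 4) ((s : ℂ) ^ 2) n (((u : ℂ) ^ 2) ^ m * s) := by
  have hq := one_sub_pow_succ_ne_zero (norm_pow_four_lt_one hu1)
  have hp : (u : ℂ) ^ 2 ≠ 0 := pow_ne_zero 2 (Complex.ofReal_ne_zero.2 hu0.ne')
  rw [sphA1, gaussianPairing, ← tsum_mul_left]
  refine tsum_congr fun m => ?_
  have hgauss : (((u ^ 4) ^ ((m : ℝ) ^ 2 / 4) : ℝ) : ℂ) = (u : ℂ) ^ m ^ 2 :=
    (rpow_sq_div_four hu0 m).trans (by exact_mod_cast zpow_natCast (u : ℂ) (m ^ 2))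
  have hterm := sphericalTerm_inv_node (q := u ^ 4) (p := (u : ℂ) ^ 2)
    (by simpa only [Complex.ofReal_pow] using hq) (by push_cast; ring) hp hs
    (by simpa only [Complex.ofReal_pow] using hgen) hX n m
  rw [Complex.ofReal_pow] at hterm ⊢
  rw [hgauss]
  linear_combination (u : ℂ) ^ m ^ 2 * hterm

lemma theta_mul_sphA1_inv_node {u s : ℝ} (hu0 : 0 < u) (hu1 : ‖(u : ℂ)‖ < 1) (hs : (s : ℂ) ≠ 0)
    (hgen : ∀ i : ℕ, 1 - ((s : ℂ) ^ 2) ^ 2 * ((u : ℂ) ^ 4) ^ i ≠ 0) {X : ℂ} (hX : X ≠ 0) (n : ℕ) :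
    theta u s * sphA1 (u ^ 4) s X (((u : ℂ) ^ 2) ^ n * s)⁻¹ =
      theta u X * theta u (((u : ℂ) ^ 2) ^ n * s)⁻¹ *
        (rogers ((u : ℂ) ^ 4) ((s : ℂ) ^ 2) n X / rogers ((u : ℂ) ^ 4) ((s : ℂ) ^ 2) n s) *
        ∏' j : ℕ, (1 - (s : ℂ) ^ 2 * ((u : ℂ) ^ 4) ^ (j + 1)) / (1 - ((u : ℂ) ^ 4) ^ (j + 1)) := by
  have hu : (u : ℂ) ≠ 0 := Complex.ofReal_ne_zero.2 hu0.ne'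
  have ht : 1 - (s : ℂ) ^ 2 ≠ 0 := by simpa using one_sub_mul_pow_ne_zero_of_sq hgen 0
  have hR := rogers_self_ne_zero (one_sub_pow_succ_ne_zero (norm_pow_four_lt_one hu1)) hs hgen n
  have hpairing := gaussianPairing_node hu1 hu hs hX n
  rw [← sphA1_inv_node hu0 hu1 hs hgen hX, qPochRatioLimit] at hpairing
  rw [← theta_mul_inv_node hu hs n, mul_div_assoc', div_mul_eq_mul_div, eq_div_iff hR]
  refine mul_left_cancel₀ ht ?_
  linear_combination theta u (((u : ℂ) ^ 2) ^ n * s)⁻¹ * hpairing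

end Spherical

end QTShintani

open QTShintani in
theorem qt_shintani_A1_general {q s : ℝ} (hq0 : 0 < q) (hq1 : q < 1) (hs : s ≠ 0)
    (hgen : ∀ i : ℕ, s ^ 4 * q ^ i ≠ 1) (n : ℕ) {X : ℂ} (hX : X ≠ 0) :
    thetaA1 q (s : ℂ) *
      sphA1 q s X (((q ^ (-(n : ℝ) / 2) : ℝ) : ℂ) * (s : ℂ)⁻¹) =
    thetaA1 q X * thetaA1 q (((q ^ (-(n : ℝ) / 2) : ℝ) : ℂ) * (s : ℂ)⁻¹) *
      (RogersA1 q ((s : ℂ) ^ 2) n X / RogersA1 q ((s : ℂ) ^ 2) n (s : ℂ)) *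
      ∏' j : ℕ, (1 - (s : ℂ) ^ 2 * (q : ℂ) ^ (j + 1)) / (1 - (q : ℂ) ^ (j + 1)) := by
  have hgen' (i : ℕ) : 1 - ((s : ℂ) ^ 2) ^ 2 * (q : ℂ) ^ i ≠ 0 := by
    rw [← pow_mul (s : ℂ), sub_ne_zero]
    exact_mod_cast (hgen i).symm
  have hs' : (s : ℂ) ≠ 0 := Complex.ofReal_ne_zero.2 hs
  obtain ⟨u, hu0, hu1, rfl⟩ := exists_pow_four_eq hq0 hq1
  have hq : ∀ i : ℕ, 1 - ((u ^ 4 : ℝ) : ℂ) ^ (i + 1) ≠ 0 := by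
    simpa only [Complex.ofReal_pow] using one_sub_pow_succ_ne_zero (norm_pow_four_lt_one hu1)
  rw [rogersA1_div_rogersA1 hq (one_sub_mul_pow_ne_zero_of_sq hgen') hX hs',
    rpow_neg_div_two_mul_inv hu0]
  simp only [thetaA1_pow_four hu0, Complex.ofReal_pow] at hgen' ⊢
  exact theta_mul_sphA1_inv_node hu0 hu1 hs' hgen' hX n

/-- the q,t-Shintani (evaluation) formula of type A₁ at Λ₀ = q^{-n/2} s⁻¹. -/
theorem qt_shintani_A1 (q s : ℝ) (hq0 : 0 < q) (hq1 : q < 1)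
    (hs0 : 0 < s) (hs1 : s < 1) (n : ℕ) (X : ℂ) (hX : X ≠ 0) :
    thetaA1 q (s : ℂ) *
      sphA1 q s X (((q ^ (-(n : ℝ) / 2) : ℝ) : ℂ) * (s : ℂ)⁻¹) =
    thetaA1 q X * thetaA1 q (((q ^ (-(n : ℝ) / 2) : ℝ) : ℂ) * (s : ℂ)⁻¹) *
      (RogersA1 q ((s : ℂ) ^ 2) n X / RogersA1 q ((s : ℂ) ^ 2) n (s : ℂ)) *
      ∏' j : ℕ, (1 - (s : ℂ) ^ 2 * (q : ℂ) ^ (j + 1)) / (1 - (q : ℂ) ^ (j + 1)) :=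
  qt_shintani_A1_general hq0 hq1 hs0.ne' (fun i => ne_of_lt <|
    mul_lt_one_of_nonneg_of_lt_one_left (by positivity) (pow_lt_one₀ hs0.le hs1 four_ne_zero)
      (pow_le_one₀ hq0.le hq1.le)) n hX

end
end
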